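/- Let X be the punctured Möbius band with boundary circles C₁ and C₂. Suppose f : X → X is a boundary-preserving map with f(C₂) ⊆ C₂ such that the restriction, viewed as a map f|C₂ : C₂ → C₂, is essential, while the restriction f|C₁ : C₁ → ∂X is inessential. Then f is boundary-homotopic to a map g : X → X having no fixed points in X ∖ ∂X, i.e., every fixed point of g lies in ∂X. -/

import Mathlib

open Set

namespace PMB

/-- The square [0,1] × [−1,1] as a subspace of ℝ². -/
def Sq : Set (ℝ × ℝ) := Set.Icc 0 1 ×ˢ Set.Icc (-1) 1

/-- The identification (0,y) ∼ (1,−y) on the square. -/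
def rel (p q : Sq) : Prop :=
  (p : ℝ × ℝ) = (q : ℝ × ℝ) ∨
  ((p : ℝ × ℝ).1 = 0 ∧ (q : ℝ × ℝ).1 = 1 ∧ (p : ℝ × ℝ).2 = -(q : ℝ × ℝ).2) ∨
  ((p : ℝ × ℝ).1 = 1 ∧ (q : ℝ × ℝ).1 = 0 ∧ (q : ℝ × ℝ).2 = -(p : ℝ × ℝ).2)

/-- The Möbius band: the quotient of the square by the identification. -/
def M := Quot rel

instance : TopologicalSpace M := inferInstanceAs (TopologicalSpace (Quot rel))

/-- The quotient map. -/
def qm : Sq → M := Quot.mk rel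

/-- The open disc of radius 1/4 centred at (1/2, 0). -/
def Bdisc : Set (ℝ × ℝ) := Metric.ball (1/2, 0) (1/4)

/-- The circle of radius 1/4 centred at (1/2, 0). -/
def Scirc : Set (ℝ × ℝ) := Metric.sphere (1/2, 0) (1/4)

/-- The punctured Möbius band, as a subset of the Möbius band. -/
def Xset : Set M := {m | m ∉ qm '' {p : Sq | (p : ℝ × ℝ) ∈ Bdisc}}

/-- The punctured Möbius band as a topological space. -/
abbrev X : Type := ↥Xset

/-- The boundary circle of the Möbius band. -/
def C1 : Set X := {x | ∃ p : Sq, qm p = (x : M) ∧ ((p : ℝ × ℝ).2 = 1 ∨ (p : ℝ × ℝ).2 = -1)}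

/-- The boundary circle coming from the removed disc. -/
def C2 : Set X := {x | ∃ p : Sq, qm p = (x : M) ∧ (p : ℝ × ℝ) ∈ Scirc}

/-- The boundary of the punctured Möbius band. -/
def Bd : Set X := C1 ∪ C2

/-- A self-map of the punctured Möbius band is boundary-preserving if it sends ∂X into ∂X. -/
def BoundaryPreserving (f : C(X, X)) : Prop := MapsTo f Bd Bd

/-- Two self-maps are boundary-homotopic if there is a homotopy between them keeping
∂X inside ∂X at all times. -/
def BoundaryHomotopic (f g : C(X, X)) : Prop :=
  ∃ H : ContinuousMap.Homotopy f g, ∀ x : X, x ∈ Bd → ∀ t : unitInterval, H (t, x) ∈ Bd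

/-- A continuous map is inessential if it is homotopic to a constant map. -/
def Inessential {α β : Type*} [TopologicalSpace α] [TopologicalSpace β] (f : C(α, β)) : Prop :=
  ∃ b : β, ContinuousMap.Homotopic f (ContinuousMap.const α b)

/-- A continuous map is essential if it is not homotopic to a constant map. -/
def Essential {α β : Type*} [TopologicalSpace α] [TopologicalSpace β] (f : C(α, β)) : Prop :=
  ¬ Inessential f

/-- The restriction of a self-map of X to a subset `s` mapped into a subset `t`,
as a continuous map between the subspaces. -/
def restrictMap (f : C(X, X)) {s t : Set X} (h : MapsTo f s t) : C(s, t) :=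
  ⟨fun x => ⟨f x, h x.2⟩, Continuous.subtype_mk (f.continuous.comp continuous_subtype_val) _⟩


lemma rel_equiv : Equivalence rel := by
  refine ⟨fun p => Or.inl rfl, ?_, ?_⟩
  · rintro p q (h | ⟨h1, h2, h3⟩ | ⟨h1, h2, h3⟩)
    · exact Or.inl h.symm
    · exact Or.inr (Or.inr ⟨h2, h1, h3⟩)
    · exact Or.inr (Or.inl ⟨h2, h1, h3⟩)
  · rintro ⟨⟨p1, p2⟩, hp⟩ ⟨⟨q1, q2⟩, hq⟩ ⟨⟨s1, s2⟩, hs⟩ h h'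
    simp only [rel, Prod.mk.injEq] at h h' ⊢
    grind

lemma qm_eq_iff {p q : Sq} : qm p = qm q ↔ rel p q := by
  constructor
  · intro h
    have := Quot.eqvGen_exact h
    exact (rel_equiv.eqvGen_iff).1 this
  · intro h
    exact Quot.sound h

lemma continuous_qm : Continuous qm := continuous_quot_mk

lemma isQuotientMap_qm : Topology.IsQuotientMap qm := isQuotientMap_quot_mk

lemma qm_surj : Function.Surjective qm := Quot.mk_surjective

/-- separating functions -/
def sepf (p : Sq) : ℝ × ℝ × ℝ × ℝ :=
  (p.1.1 * (1 - p.1.1), (1 - 2 * p.1.1) * (p.1.1 * (1 - p.1.1)), p.1.2 * (1 - 2 * p.1.1),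
    p.1.2 * (p.1.1 * (1 - p.1.1)))

lemma sepf_rel {p q : Sq} (h : rel p q) : sepf p = sepf q := by
  obtain ⟨⟨p1, p2⟩, hp⟩ := p
  obtain ⟨⟨q1, q2⟩, hq⟩ := q
  simp only [rel, Prod.mk.injEq] at h
  simp only [sepf, Prod.mk.injEq]
  rcases h with ⟨rfl, rfl⟩ | ⟨rfl, rfl, rfl⟩ | ⟨rfl, rfl, rfl⟩ <;> norm_num

lemma rel_of_sepf {p q : Sq} (h : sepf p = sepf q) : rel p q := by
  obtain ⟨⟨p1, p2⟩, hp⟩ := p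
  obtain ⟨⟨q1, q2⟩, hq⟩ := q
  simp only [rel, Prod.mk.injEq]
  simp only [sepf, Prod.mk.injEq] at h
  obtain ⟨h1, h2, h3, h4⟩ := h
  by_cases ha : q1 * (1 - q1) = 0
  · have hb : p1 * (1 - p1) = 0 := by rw [h1, ha]
    rcases mul_eq_zero.1 ha with ha | ha <;> rcases mul_eq_zero.1 hb with hb | hb
    · subst ha hb; left; simpa using h3
    · have : p1 = 1 := by linarith
      subst this ha; right; right; norm_num at h3; exact ⟨rfl, rfl, by linarith⟩
    · have : q1 = 1 := by linarith
      subst this hb; right; left; norm_num at h3; exact ⟨rfl, rfl, by linarith⟩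
    · have e1 : q1 = 1 := by linarith
      have e2 : p1 = 1 := by linarith
      subst e1 e2; left; norm_num at h3; exact ⟨rfl, by linarith⟩
  · left
    rw [h1] at h2 h4
    have e1 := mul_right_cancel₀ ha h2
    have e2 := mul_right_cancel₀ ha h4
    exact ⟨by linarith, e2⟩

instance : T2Space M := by
  have hc : Continuous (Quot.lift sepf (fun _ _ h => sepf_rel h) : M → ℝ × ℝ × ℝ × ℝ) := by
    refine isQuotientMap_qm.continuous_iff.2 ?_
    change Continuous sepf
    unfold sepf
    fun_prop
  refine T2Space.of_injective_continuous (f := Quot.lift sepf (fun _ _ h => sepf_rel h)) ?_ hc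
  intro a b
  obtain ⟨a, rfl⟩ := qm_surj a
  obtain ⟨b, rfl⟩ := qm_surj b
  intro h
  exact qm_eq_iff.2 (rel_of_sepf h)

lemma mem_Bdisc {p : ℝ × ℝ} : p ∈ Bdisc ↔ |p.1 - 1/2| < 1/4 ∧ |p.2| < 1/4 := by
  simp [Bdisc, Prod.dist_eq, Real.dist_eq]

lemma mem_Scirc {p : ℝ × ℝ} : p ∈ Scirc ↔ max |p.1 - 1/2| |p.2| = 1/4 := by
  rw [Scirc, Metric.mem_sphere, Prod.dist_eq, Real.dist_eq, Real.dist_eq, sub_zero]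

lemma rel_mid {p q : Sq} (h : rel p q) (h0 : 0 < p.1.1) (h1 : p.1.1 < 1) : p = q := by
  rcases h with h | ⟨h, -⟩ | ⟨h, -⟩
  · exact Subtype.ext h
  · linarith
  · linarith

lemma qm_mem_Xset {p : Sq} : qm p ∈ Xset ↔ (p : ℝ × ℝ) ∉ Bdisc := by
  simp only [Xset, mem_ofPred_eq, mem_image, not_exists, not_and]
  constructor
  · intro h hp
    exact h p hp rfl
  · rintro h q hq hqp
    have hr := qm_eq_iff.1 hqp
    have hq' := (mem_Bdisc.1 hq).1
    rw [abs_lt] at hq'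
    have := rel_mid hr (by linarith) (by linarith)
    exact h (this ▸ hq)

/-- distance to the nearest integer -/
noncomputable def dz (θ : ℝ) : ℝ := ‖(θ : UnitAddCircle)‖

lemma dz_cont : Continuous dz := by
  unfold dz
  exact continuous_norm.comp (AddCircle.continuous_mk' 1)

lemma dz_add_int (θ : ℝ) (n : ℤ) : dz (θ + n) = dz θ := by
  simp only [dz, UnitAddCircle.norm_eq, round_add_intCast]
  push_cast; congr 1; ring

lemma dz_abs {θ : ℝ} (h : |θ| ≤ 1/2) : dz θ = |θ| := by
  unfold dz
  have := (AddCircle.norm_coe_eq_abs_iff (p := 1) (x := θ) one_ne_zero).2 (by simpa using h)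
  exact this

noncomputable def uu (θ : ℝ) : ℝ := max (-1) (min 1 (2 - 8 * dz θ))
noncomputable def vv (θ : ℝ) : ℝ := uu (θ - 1/4)

lemma uu_cont : Continuous uu := by
  have := dz_cont
  unfold uu; fun_prop
lemma vv_cont : Continuous vv := by
  have := uu_cont
  unfold vv; fun_prop

lemma uu_add_int (θ : ℝ) (n : ℤ) : uu (θ + n) = uu θ := by simp [uu, dz_add_int]
lemma vv_add_int (θ : ℝ) (n : ℤ) : vv (θ + n) = vv θ := by
  unfold vv; rw [← uu_add_int (θ - 1/4) n]; congr 1; ring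

lemma dz_eq1 {θ : ℝ} (h : -1/2 ≤ θ) (h' : θ ≤ 0) : dz θ = -θ := by
  rw [dz_abs, abs_of_nonpos h']; rw [abs_le]; constructor <;> linarith
lemma dz_eq2 {θ : ℝ} (h : 0 ≤ θ) (h' : θ ≤ 1/2) : dz θ = θ := by
  rw [dz_abs, abs_of_nonneg h]; rw [abs_le]; constructor <;> linarith
lemma dz_eq3 {θ : ℝ} (h : 1/2 ≤ θ) (h' : θ ≤ 1) : dz θ = 1 - θ := by
  have := dz_add_int (θ - 1) 1
  have h2 := dz_eq1 (θ := θ - 1) (by linarith) (by linarith)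
  simp at this
  rw [this, h2]; ring

lemma uv1 {θ : ℝ} (h : -1/8 ≤ θ) (h' : θ ≤ 1/8) : uu θ = 1 ∧ vv θ = 8 * θ := by
  have e : dz θ ≤ 1/8 := by
    rw [dz_abs] <;> rw [abs_le] <;> constructor <;> linarith
  have e2 := dz_eq1 (θ := θ - 1/4) (by linarith) (by linarith)
  simp only [uu, vv, e2]
  constructor
  · rw [min_eq_left (by linarith), max_eq_right (by norm_num)]
  · rw [min_eq_right (by linarith), max_eq_right (by linarith)]; ring
lemma uv2 {θ : ℝ} (h : 1/8 ≤ θ) (h' : θ ≤ 3/8) : uu θ = 2 - 8 * θ ∧ vv θ = 1 := by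
  have e : dz (θ - 1/4) ≤ 1/8 := by
    rw [dz_abs] <;> rw [abs_le] <;> constructor <;> linarith
  have e2 := dz_eq2 (θ := θ) (by linarith) (by linarith)
  simp only [uu, vv, e2]
  constructor
  · rw [min_eq_right (by linarith), max_eq_right (by linarith)]
  · rw [min_eq_left (by linarith), max_eq_right (by norm_num)]
lemma uv3 {θ : ℝ} (h : 3/8 ≤ θ) (h' : θ ≤ 5/8) : uu θ = -1 ∧ vv θ = 4 - 8 * θ := by
  have e : 3/8 ≤ dz θ := by
    rcases le_total θ (1/2) with h1 | h1
    · rw [dz_eq2 (by linarith) h1]; exact h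
    · rw [dz_eq3 h1 (by linarith)]; linarith
  have e2 := dz_eq2 (θ := θ - 1/4) (by linarith) (by linarith)
  simp only [uu, vv, e2]
  constructor
  · rw [min_eq_right (by linarith), max_eq_left (by linarith)]
  · rw [min_eq_right (by linarith), max_eq_right (by linarith)]; ring
lemma uv4 {θ : ℝ} (h : 5/8 ≤ θ) (h' : θ ≤ 7/8) : uu θ = 8 * θ - 6 ∧ vv θ = -1 := by
  have e : 3/8 ≤ dz (θ - 1/4) := by
    rcases le_total (θ - 1/4) (1/2) with h1 | h1
    · rw [dz_eq2 (by linarith) h1]; linarith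
    · rw [dz_eq3 h1 (by linarith)]; linarith
  have e2 := dz_eq3 (θ := θ) (by linarith) (by linarith)
  simp only [uu, vv, e2]
  constructor
  · rw [min_eq_right (by linarith), max_eq_right (by linarith)]; ring
  · rw [min_eq_right (by linarith), max_eq_left (by linarith)]

lemma uv_cases (θ : ℝ) : ∃ n : ℤ, ∃ t : ℝ, θ = t + n ∧
    ((-1/8 ≤ t ∧ t < 1/8 ∧ uu θ = 1 ∧ vv θ = 8 * t) ∨
     (1/8 ≤ t ∧ t < 3/8 ∧ uu θ = 2 - 8 * t ∧ vv θ = 1) ∨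
     (3/8 ≤ t ∧ t < 5/8 ∧ uu θ = -1 ∧ vv θ = 4 - 8 * t) ∨
     (5/8 ≤ t ∧ t < 7/8 ∧ uu θ = 8 * t - 6 ∧ vv θ = -1)) := by
  refine ⟨⌊θ + 1/8⌋, θ - ⌊θ + 1/8⌋, by ring, ?_⟩
  have h1 := Int.floor_le (θ + 1/8)
  have h2 := Int.lt_floor_add_one (θ + 1/8)
  obtain ⟨t, ht⟩ : ∃ t, t = θ - ⌊θ + 1/8⌋ := ⟨_, rfl⟩
  have hu : uu θ = uu t := by
    rw [← uu_add_int t ⌊θ + 1/8⌋, ht]; congr 1; ring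
  have hv : vv θ = vv t := by
    rw [← vv_add_int t ⌊θ + 1/8⌋, ht]; congr 1; ring
  rw [← ht, hu, hv]
  rcases lt_or_ge t (1/8) with a | a
  · exact Or.inl ⟨by linarith, a, uv1 (by linarith) a.le⟩
  rcases lt_or_ge t (3/8) with b | b
  · exact Or.inr (Or.inl ⟨a, b, uv2 a b.le⟩)
  rcases lt_or_ge t (5/8) with c | c
  · exact Or.inr (Or.inr (Or.inl ⟨b, c, uv3 b c.le⟩))
  · exact Or.inr (Or.inr (Or.inr ⟨c, by linarith, uv4 c (by linarith)⟩))

lemma uv_half (θ : ℝ) : uu (θ + 1/2) = - uu θ ∧ vv (θ + 1/2) = - vv θ := by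
  obtain ⟨n, t, rfl, -⟩ := uv_cases θ
  obtain ⟨s, m, hs, h1, h2⟩ : ∃ s : ℝ, ∃ m : ℤ, t + n = s + m ∧ -1/8 ≤ s ∧ s ≤ 7/8 := by
    refine ⟨t + n - ⌊t + n + 1/8⌋, ⌊t + n + 1/8⌋, by ring, ?_, ?_⟩
    · have h1 := Int.floor_le (t + n + 1/8)
      linarith
    · have h2 := Int.lt_floor_add_one (t + n + 1/8)
      linarith
  rw [hs, show s + (m : ℝ) + 1/2 = (s + 1/2) + m by ring]
  simp only [uu_add_int, vv_add_int]
  have p1 := uu_add_int (s + 1/2 - 1) 1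
  have p2 := vv_add_int (s + 1/2 - 1) 1
  simp only [Int.cast_one, sub_add_cancel] at p1 p2
  rcases le_total s (1/8) with a | a
  · have := uv1 h1 a; have := uv3 (θ := s + 1/2) (by linarith) (by linarith)
    constructor <;> linarith
  rcases le_total s (3/8) with b | b
  · have := uv2 a b; have := uv4 (θ := s + 1/2) (by linarith) (by linarith)
    constructor <;> linarith
  rcases le_total s (5/8) with c | c
  · have := uv3 b c; have := uv1 (θ := s + 1/2 - 1) (by linarith) (by linarith)
    constructor <;> linarith
  · have := uv4 c h2; have := uv2 (θ := s + 1/2 - 1) (by linarith) (by linarith)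
    constructor <;> linarith

lemma uv_inj {θ θ' : ℝ} (hu : uu θ = uu θ') (hv : vv θ = vv θ') : ∃ n : ℤ, θ' = θ + n := by
  obtain ⟨n, t, h, hc⟩ := uv_cases θ
  obtain ⟨n', t', h', hc'⟩ := uv_cases θ'
  refine ⟨n' - n, ?_⟩
  have : t = t' := by
    rw [hu, hv] at hc
    generalize uu θ' = a at *
    generalize vv θ' = b at *
    rcases hc with ⟨h1, h2, h3, h4⟩ | ⟨h1, h2, h3, h4⟩ | ⟨h1, h2, h3, h4⟩ | ⟨h1, h2, h3, h4⟩ <;>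
    rcases hc' with ⟨k1, k2, k3, k4⟩ | ⟨k1, k2, k3, k4⟩ | ⟨k1, k2, k3, k4⟩ | ⟨k1, k2, k3, k4⟩ <;>
    linarith
  push_cast; rw [h, h', this]; ring

/-- gates -/
def gate (m : ℤ) (θ : ℝ) : Prop := |θ - m / 2| ≤ 1/8

lemma gate_iff {m : ℤ} {θ : ℝ} : gate m θ ↔ -1/8 ≤ θ - m / 2 ∧ θ - m / 2 ≤ 1/8 := by
  rw [gate, abs_le]; constructor <;> rintro ⟨a, b⟩ <;> constructor <;> linarith

lemma gate_of_uu {θ : ℝ} (h : uu θ = 1 ∨ uu θ = -1) : ∃ m, gate m θ := by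
  obtain ⟨n, t, rfl, hc⟩ := uv_cases θ
  simp only [gate_iff]
  rcases hc with ⟨h1, h2, h3, h4⟩ | ⟨h1, h2, h3, h4⟩ | ⟨h1, h2, h3, h4⟩ | ⟨h1, h2, h3, h4⟩
  · exact ⟨2 * n, by push_cast; constructor <;> linarith⟩
  · rcases h with h | h
    · exact ⟨2 * n, by push_cast; constructor <;> linarith⟩
    · exact ⟨2 * n + 1, by push_cast; constructor <;> linarith⟩
  · exact ⟨2 * n + 1, by push_cast; constructor <;> linarith⟩
  · rcases h with h | h
    · exact ⟨2 * n + 2, by push_cast; constructor <;> linarith⟩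
    · exact ⟨2 * n + 1, by push_cast; constructor <;> linarith⟩

lemma uu_of_gate {m : ℤ} {θ : ℝ} (h : gate m θ) : uu θ = 1 ∨ uu θ = -1 := by
  rw [gate_iff] at h
  rcases Int.even_or_odd' m with ⟨k, rfl | rfl⟩
  · left
    have := uu_add_int (θ - k) k
    rw [sub_add_cancel] at this
    rw [this]
    push_cast at h
    exact (uv1 (by linarith) (by linarith)).1
  · right
    have := uu_add_int (θ - k) k
    rw [sub_add_cancel] at this
    rw [this]
    push_cast at h
    exact (uv3 (by linarith) (by linarith)).1

lemma uv_bd (θ : ℝ) : |uu θ| ≤ 1 ∧ |vv θ| ≤ 1 ∧ (|uu θ| = 1 ∨ |vv θ| = 1) := by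
  obtain ⟨n, t, h, hc⟩ := uv_cases θ
  rcases hc with ⟨h1, h2, h3, h4⟩ | ⟨h1, h2, h3, h4⟩ | ⟨h1, h2, h3, h4⟩ | ⟨h1, h2, h3, h4⟩ <;>
  rw [h3, h4] <;> simp only [abs_le, abs_neg, abs_one] <;> 
    refine ⟨?_, ?_, ?_⟩ <;> first | (simp; done) | (constructor <;> linarith)

lemma uv_surj {a b : ℝ} (ha : |a| ≤ 1) (hb : |b| ≤ 1) (h : |a| = 1 ∨ |b| = 1) :
    ∃ θ, uu θ = a ∧ vv θ = b := by
  rw [abs_le] at ha hb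
  have : a = 1 ∨ a = -1 ∨ b = 1 ∨ b = -1 := by
    rcases h with h | h
    · rcases eq_or_eq_neg_of_abs_eq h with h | h <;> simp [h]
    · rcases eq_or_eq_neg_of_abs_eq h with h | h <;> simp [h]
  rcases this with rfl | rfl | rfl | rfl
  · refine ⟨b / 8, ?_⟩
    have := uv1 (θ := b / 8) (by linarith) (by linarith)
    exact ⟨this.1, by linarith⟩
  · refine ⟨(4 - b) / 8, ?_⟩
    have := uv3 (θ := (4 - b) / 8) (by linarith) (by linarith)
    exact ⟨this.1, by linarith⟩
  · refine ⟨(2 - a) / 8, ?_⟩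
    have := uv2 (θ := (2 - a) / 8) (by linarith) (by linarith)
    exact ⟨by linarith, this.2⟩
  · refine ⟨(a + 6) / 8, ?_⟩
    have := uv4 (θ := (a + 6) / 8) (by linarith) (by linarith)
    exact ⟨by linarith, this.2⟩


noncomputable def cl (r : ℝ) : ℝ := max 0 (min 1 r)
lemma cl_mem (r : ℝ) : 0 ≤ cl r ∧ cl r ≤ 1 := by
  unfold cl; exact ⟨le_max_left _ _, max_le zero_le_one (min_le_left _ _)⟩
lemma cl_of_mem {r : ℝ} (h : 0 ≤ r) (h' : r ≤ 1) : cl r = r := by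
  unfold cl; rw [min_eq_right h', max_eq_right h]
lemma cl_of_nonpos {r : ℝ} (h : r ≤ 0) : cl r = 0 := by
  unfold cl; rw [min_eq_right (by linarith), max_eq_left h]
lemma cl_cont : Continuous cl := by unfold cl; fun_prop

noncomputable def ptv (z : ℝ × ℝ) : ℝ × ℝ :=
  (1/2 + uu z.1 * (1/4 + cl z.2 / 4), vv z.1 * (1/4 + 3 * cl z.2 / 4))

lemma ptv_cont : Continuous ptv := by
  have := uu_cont
  have := vv_cont
  have := cl_cont
  unfold ptv; fun_prop

lemma ptv_mem (z : ℝ × ℝ) : ptv z ∈ Sq := by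
  obtain ⟨h1, h2, -⟩ := uv_bd z.1
  obtain ⟨h3, h4⟩ := cl_mem z.2
  rw [abs_le] at h1 h2
  simp only [Sq, ptv, mem_prod, mem_Icc]
  refine ⟨⟨?_, ?_⟩, ?_, ?_⟩ <;> nlinarith

lemma ptv_not (z : ℝ × ℝ) : ptv z ∉ Bdisc := by
  obtain ⟨-, -, h⟩ := uv_bd z.1
  obtain ⟨h3, h4⟩ := cl_mem z.2
  rw [mem_Bdisc]
  simp only [ptv, add_sub_cancel_left, abs_mul, not_and_or, not_lt]
  rcases h with h | h
  · left; rw [h, abs_of_nonneg (by linarith)]; linarith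
  · right; rw [h, abs_of_nonneg (by linarith)]; linarith

/-- The parametrization of the punctured band by the plane. -/
noncomputable def pp (z : ℝ × ℝ) : X := ⟨qm ⟨ptv z, ptv_mem z⟩, qm_mem_Xset.2 (ptv_not z)⟩

lemma pp_cont : Continuous pp :=
  Continuous.subtype_mk (continuous_qm.comp (ptv_cont.subtype_mk _)) _

lemma pp_add_int (θ r : ℝ) (n : ℤ) : pp (θ + n, r) = pp (θ, r) := by
  apply Subtype.ext
  simp only [pp]
  congr 2
  simp [ptv, uu_add_int, vv_add_int]

lemma pp_gate {m : ℤ} {θ : ℝ} (h : gate m θ) : pp (θ + 1/2, 1) = pp (θ, 1) := by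
  apply Subtype.ext
  simp only [pp]
  rw [qm_eq_iff]
  have := uv_half θ
  right
  simp only [ptv, this.1, this.2, cl_of_mem zero_le_one le_rfl]
  rcases uu_of_gate h with h | h
  · left; rw [h]; norm_num
  · right; rw [h]; norm_num

lemma pp_surj (x : X) : ∃ θ r, 0 ≤ r ∧ r ≤ 1 ∧ pp (θ, r) = x := by
  obtain ⟨x, hx⟩ := x
  obtain ⟨⟨⟨x1, x2⟩, hp⟩, rfl⟩ := qm_surj x
  rw [qm_mem_Xset, mem_Bdisc] at hx
  simp only [Sq, mem_prod, mem_Icc] at hp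
  obtain ⟨⟨a1, a2⟩, a3, a4⟩ := hp
  simp only [not_and_or, not_lt] at hx
  have b1 : |x1 - 1/2| ≤ 1/2 := by rw [abs_le]; constructor <;> linarith
  have b2 : |x2| ≤ 1 := by rw [abs_le]; constructor <;> linarith
  obtain ⟨r, hr0, hr1, hru, hrv, hr⟩ : ∃ r : ℝ, 0 ≤ r ∧ r ≤ 1 ∧ |x1 - 1/2| ≤ 1/4 + r/4 ∧
      |x2| ≤ 1/4 + 3 * r / 4 ∧ (|x1 - 1/2| = 1/4 + r/4 ∨ |x2| = 1/4 + 3 * r/4) := by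
    rcases le_total (4 * |x1 - 1/2| - 1) ((4 * |x2| - 1)/3) with h | h
    · refine ⟨(4 * |x2| - 1)/3, ?_, ?_, ?_, ?_, Or.inr ?_⟩ <;> 
        first | linarith | (rcases hx with hx | hx <;> linarith)
    · refine ⟨4 * |x1 - 1/2| - 1, ?_, ?_, ?_, ?_, Or.inl ?_⟩ <;> 
        first | linarith | (rcases hx with hx | hx <;> linarith)
  have p1 : 0 < 1/4 + r/4 := by linarith
  have p2 : 0 < 1/4 + 3 * r/4 := by linarith
  obtain ⟨θ, h1, h2⟩ := uv_surj (a := (x1 - 1/2)/(1/4 + r/4)) (b := x2/(1/4 + 3 * r/4))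
    (by rw [abs_div, abs_of_pos p1, div_le_one p1]; exact hru)
    (by rw [abs_div, abs_of_pos p2, div_le_one p2]; exact hrv)
    (by rw [abs_div, abs_of_pos p1, abs_div, abs_of_pos p2, div_eq_one_iff_eq p1.ne',
          div_eq_one_iff_eq p2.ne']; exact hr)
  refine ⟨θ, r, hr0, hr1, ?_⟩
  apply Subtype.ext
  simp only [pp]
  congr 2
  simp only [ptv, h1, h2, cl_of_mem hr0 hr1]
  rw [div_mul_cancel₀ _ p1.ne', div_mul_cancel₀ _ p2.ne']
  ext <;> simp

lemma rad_eq {a b r : ℝ} (hr : 0 ≤ r) (ha : |a| ≤ 1) (hb : |b| ≤ 1)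
    (h : |a| = 1 ∨ |b| = 1) :
    r = max (4 * |a * (1/4 + r/4)| - 1) ((4 * |b * (1/4 + 3 * r/4)| - 1)/3) := by
  have p1 : 0 < 1/4 + r/4 := by linarith
  have p2 : 0 < 1/4 + 3 * r/4 := by linarith
  rw [abs_mul, abs_mul, abs_of_pos p1, abs_of_pos p2]
  have q1 : |a| * (1/4 + r/4) ≤ 1/4 + r/4 := by nlinarith
  have q2 : |b| * (1/4 + 3 * r/4) ≤ 1/4 + 3 * r/4 := by nlinarith
  rcases h with h | h
  · rw [max_eq_left] <;> rw [h] <;> linarith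
  · rw [max_eq_right] <;> rw [h] <;> linarith

lemma pp_inj {θ r θ' r' : ℝ} (hr : 0 ≤ r) (hr1 : r ≤ 1) (hr' : 0 ≤ r') (hr1' : r' ≤ 1)
    (h : pp (θ, r) = pp (θ', r')) :
    (r' = r ∧ ∃ n : ℤ, θ' = θ + n) ∨
    (r = 1 ∧ r' = 1 ∧ (∃ m, gate m θ) ∧ ∃ n : ℤ, θ' = θ + 1/2 + n) := by
  have h := qm_eq_iff.1 (congrArg Subtype.val h)
  obtain ⟨b1, b2, b3⟩ := uv_bd θ
  obtain ⟨c1, c2, c3⟩ := uv_bd θ'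
  have p1 : 0 < 1/4 + r/4 := by linarith
  have p2 : 0 < 1/4 + 3 * r/4 := by linarith
  have key : (uu θ = 1 ∨ uu θ = -1) → r = 1 → r' = 1 → uu θ' = - uu θ → vv θ' = - vv θ → 
    (r = 1 ∧ r' = 1 ∧ (∃ m, gate m θ) ∧ ∃ n : ℤ, θ' = θ + 1/2 + n) := by
    intro k1 k2 k3 k4 k5
    have := uv_half θ
    exact ⟨k2, k3, gate_of_uu k1, uv_inj (by rw [this.1, k4]) (by rw [this.2, k5])⟩
  rcases h with h | h | h
  · left
    simp only [ptv, Prod.mk.injEq, cl_of_mem hr hr1, cl_of_mem hr' hr1', add_right_inj] at h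
    have e1 := rad_eq hr b1 b2 b3
    have e2 := rad_eq hr' c1 c2 c3
    rw [← h.1, ← h.2, ← e1] at e2
    subst e2
    exact ⟨rfl, uv_inj (mul_right_cancel₀ p1.ne' h.1) (mul_right_cancel₀ p2.ne' h.2)⟩
  all_goals
    right
    simp only [ptv, cl_of_mem hr hr1, cl_of_mem hr' hr1'] at h
    obtain ⟨h1, h2, h3⟩ := h
    rw [abs_le] at b1 c1
    have e1 : r = 1 := by nlinarith
    have e2 : r' = 1 := by nlinarith
    subst e1 e2
    refine key ?_ rfl rfl ?_ ?_
    · first | (left; linarith) | (right; linarith)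
    · linarith
    · linarith

lemma pp_mem_C2 (θ r : ℝ) (hr : r ≤ 0) : pp (θ, r) ∈ C2 := by
  refine ⟨_, rfl, ?_⟩
  rw [mem_Scirc]
  obtain ⟨b1, b2, b3⟩ := uv_bd θ
  simp only [ptv, cl_of_nonpos hr, add_sub_cancel_left, abs_mul]
  rw [show |(1/4 + 0/4 : ℝ)| = 1/4 by norm_num, show |(1/4 + 3 * 0/4 : ℝ)| = 1/4 by norm_num]
  rcases b3 with h | h <;> rw [h]
  · rw [max_eq_left] <;> linarith
  · rw [max_eq_right] <;> linarith

lemma r_of_C2 {θ r : ℝ} (hr : 0 ≤ r) (hr1 : r ≤ 1) (h : pp (θ, r) ∈ C2) : r = 0 := by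
  obtain ⟨p, hp, hs⟩ := h
  rw [mem_Scirc] at hs
  have := qm_eq_iff.1 hp
  have h1 : |p.1.1 - 1/2| ≤ 1/4 := hs ▸ le_max_left _ _
  rw [abs_le] at h1
  have := rel_mid this (by linarith) (by linarith)
  subst this
  obtain ⟨b1, b2, b3⟩ := uv_bd θ
  simp only [ptv, cl_of_mem hr hr1, add_sub_cancel_left, abs_mul] at hs
  have l1 := hs ▸ le_max_left (|uu θ| * |1/4 + r/4|) (|vv θ| * |1/4 + 3 * r/4|)
  have l2 := hs ▸ le_max_right (|uu θ| * |1/4 + r/4|) (|vv θ| * |1/4 + 3 * r/4|)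
  rw [abs_of_nonneg (show (0:ℝ) ≤ 1/4 + r/4 by linarith)] at l1
  rw [abs_of_nonneg (show (0:ℝ) ≤ 1/4 + 3*r/4 by linarith)] at l2
  rcases b3 with h | h
  · rw [h] at l1; linarith
  · rw [h] at l2; linarith

lemma pp_one (θ : ℝ) : (∃ m, gate m θ) ∨ (pp (θ, 1) ∈ C1 ∧ pp (θ + 1/2, 1) ∈ C1) := by
  obtain ⟨b1, b2, b3⟩ := uv_bd θ
  rcases b3 with h | h
  · exact Or.inl (gate_of_uu (eq_or_eq_neg_of_abs_eq h))
  · right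
    have h' := eq_or_eq_neg_of_abs_eq h
    refine ⟨⟨_, rfl, ?_⟩, ⟨_, rfl, ?_⟩⟩
    · simp only [ptv, cl_of_mem zero_le_one le_rfl]
      rcases h' with h | h <;> rw [h] <;> norm_num
    · simp only [ptv, cl_of_mem zero_le_one le_rfl, (uv_half θ).2]
      rcases h' with h | h <;> rw [h] <;> norm_num



def Cset : Set (ℝ × ℝ) := Icc (-1/4) (3/4) ×ˢ Icc 0 1
lemma Cset_compact : IsCompact Cset := isCompact_Icc.prod isCompact_Icc
instance : CompactSpace Cset := isCompact_iff_compactSpace.1 Cset_compact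

lemma mem_Cset {z : ℝ × ℝ} : z ∈ Cset ↔ -1/4 ≤ z.1 ∧ z.1 ≤ 3/4 ∧ 0 ≤ z.2 ∧ z.2 ≤ 1 := by
  simp only [Cset, mem_prod, mem_Icc]; tauto

noncomputable def ppC (z : Cset) : X := pp z

lemma ppC_cont : Continuous ppC := pp_cont.comp continuous_subtype_val

def D0 : Set (ℝ × ℝ) := {z | -1/4 ≤ z.1 ∧ z.1 < 3/4 ∧ 0 ≤ z.2 ∧ z.2 ≤ 1 ∧
  ¬ (z.2 = 1 ∧ 3/8 ≤ z.1 ∧ z.1 ≤ 5/8)}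

lemma D0_sub {z} (h : z ∈ D0) : z ∈ Cset := by
  obtain ⟨h1, h2, h3, h4, -⟩ := h
  exact mem_Cset.2 ⟨h1, h2.le, h3, h4⟩

lemma D0_surj (x : X) : ∃ z ∈ D0, pp z = x := by
  obtain ⟨θ, r, hr, hr1, h⟩ := pp_surj x
  have : ∃ θ, -1/4 ≤ θ ∧ θ < 3/4 ∧ pp (θ, r) = x := by
    refine ⟨θ + (-⌊θ + 1/4⌋ : ℤ), ?_, ?_, by rw [pp_add_int, h]⟩
    · have := Int.floor_le (θ + 1/4); push_cast; linarith
    · have := Int.lt_floor_add_one (θ + 1/4); push_cast; linarith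
  obtain ⟨θ, h1, h2, h⟩ := this
  by_cases hb : r = 1 ∧ 3/8 ≤ θ ∧ θ ≤ 5/8
  · obtain ⟨rfl, h3, h4⟩ := hb
    refine ⟨(θ - 1/2, 1), ⟨by simp only; linarith, by simp only; linarith, by simp, by simp, ?_⟩, ?_⟩
    · rintro ⟨-, h5, -⟩; simp only at h5; linarith
    · have : gate 0 (θ - 1/2) := by rw [gate_iff]; push_cast; constructor <;> linarith
      rw [← pp_gate this, ← h]; congr 2; ring
  · exact ⟨(θ, r), ⟨h1, h2, hr, hr1, hb⟩, h⟩

lemma ppC_surj : Function.Surjective ppC := fun x => by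
  obtain ⟨z, hz, h⟩ := D0_surj x
  exact ⟨⟨z, D0_sub hz⟩, h⟩

lemma gate_rng {m : ℤ} {θ : ℝ} (h : gate m θ) (h1 : -1/4 ≤ θ) (h2 : θ ≤ 3/4) : m = 0 ∨ m = 1 := by
  rw [gate_iff] at h
  have a : (-1 : ℝ) < m := by linarith
  have b : (m : ℝ) < 2 := by linarith
  have a' : -1 < m := by exact_mod_cast a
  have b' : m < 2 := by exact_mod_cast b
  omega

lemma D0_inj {z w : ℝ × ℝ} (hz : z ∈ D0) (hw : w ∈ D0) (h : pp z = pp w) : z = w := by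
  obtain ⟨θ, r⟩ := z
  obtain ⟨θ', r'⟩ := w
  obtain ⟨a1, a2, a3, a4, a5⟩ := hz
  obtain ⟨b1, b2, b3, b4, b5⟩ := hw
  simp only at *
  rcases pp_inj a3 a4 b3 b4 h with ⟨rfl, n, rfl⟩ | ⟨rfl, rfl, ⟨m, hm⟩, n, rfl⟩
  · have a : (-1 : ℝ) < n := by linarith
    have b : (n : ℝ) < 1 := by linarith
    have a' : -1 < n := by exact_mod_cast a
    have b' : n < 1 := by exact_mod_cast b
    have : n = 0 := by omega
    subst this; simp
  · exfalso
    have hm' := gate_iff.1 hm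
    rcases gate_rng hm a1 a2.le with rfl | rfl
    · push_cast at hm'
      have a : (-1 : ℝ) < n := by linarith
      have b : (n : ℝ) < 1 := by linarith
      have a' : -1 < n := by exact_mod_cast a
      have b' : n < 1 := by exact_mod_cast b
      have : n = 0 := by omega
      subst this
      refine b5 ⟨rfl, ?_, ?_⟩ <;> push_cast <;> linarith
    · push_cast at hm'
      refine a5 ⟨rfl, ?_, ?_⟩ <;> linarith

noncomputable def sec (x : X) : ℝ × ℝ := (D0_surj x).choose
lemma sec_mem (x : X) : sec x ∈ D0 := (D0_surj x).choose_spec.1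
lemma pp_sec (x : X) : pp (sec x) = x := (D0_surj x).choose_spec.2
lemma sec_pp {z} (h : z ∈ D0) : sec (pp z) = z := D0_inj (sec_mem _) h (pp_sec _)

lemma quotC (P : Type*) [TopologicalSpace P] :
    Topology.IsQuotientMap (Prod.map (id : P → P) ppC) := by
  have h : IsProperMap ppC := ppC_cont.isProperMap
  have h2 : IsProperMap (Prod.map (id : P → P) ppC) := isProperMap_id.prodMap h
  exact h2.isClosedMap.isQuotientMap h2.continuous (Function.surjective_id.prodMap ppC_surj)

lemma quotC' : Topology.IsQuotientMap ppC := 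
  (ppC_cont.isProperMap).isClosedMap.isQuotientMap ppC_cont ppC_surj

def sal : Set X := pp '' {z | z.2 = 1 ∧ -1/8 ≤ z.1 ∧ z.1 ≤ 1/8}
def sbe : Set X := pp '' {z | z.1 = -1/4 ∧ 0 ≤ z.2 ∧ z.2 ≤ 1}
def sbe' : Set X := pp '' {z | z.1 = 1/4 ∧ 0 ≤ z.2 ∧ z.2 ≤ 1}

lemma sal_closed : IsClosed sal := by
  have : IsCompact {z : ℝ × ℝ | z.2 = 1 ∧ -1/8 ≤ z.1 ∧ z.1 ≤ 1/8} := by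
    convert (isCompact_Icc (a := (-1/8:ℝ)) (b := 1/8)).prod (isCompact_singleton (x := (1:ℝ))) using 1
    ext z; simp only [mem_ofPred_eq, mem_prod, mem_Icc, mem_singleton_iff]; tauto
  exact (this.image pp_cont).isClosed
lemma sb_closed (a : ℝ) : IsClosed (pp '' {z | z.1 = a ∧ 0 ≤ z.2 ∧ z.2 ≤ 1}) := by
  have : IsCompact {z : ℝ × ℝ | z.1 = a ∧ 0 ≤ z.2 ∧ z.2 ≤ 1} := by
    convert (isCompact_singleton (x := a)).prod (isCompact_Icc (a := (0:ℝ)) (b := 1)) using 1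
    ext z; simp only [mem_ofPred_eq, mem_prod, mem_Icc, mem_singleton_iff]
  exact (this.image pp_cont).isClosed
lemma sbe_closed : IsClosed sbe := sb_closed _
lemma sbe'_closed : IsClosed sbe' := sb_closed _

/-- position of a point of `Cset` relative to the cuts -/
lemma not_sal {z : ℝ × ℝ} (hz : z ∈ Cset) (h : pp z ∉ sal) :
    ¬ (z.2 = 1 ∧ -1/8 ≤ z.1 ∧ z.1 ≤ 1/8) ∧ ¬ (z.2 = 1 ∧ 3/8 ≤ z.1 ∧ z.1 ≤ 5/8) := by
  refine ⟨fun h' => h ⟨z, h', rfl⟩, fun h' => h ⟨(z.1 - 1/2, 1), ⟨rfl, ?_, ?_⟩, ?_⟩⟩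
  · simp only; linarith [h'.2.1]
  · simp only; linarith [h'.2.2]
  · have : gate 0 (z.1 - 1/2) := by
      rw [gate_iff]; push_cast; constructor <;> linarith [h'.2.1, h'.2.2]
    rw [← pp_gate this, sub_add_cancel, ← h'.1]

lemma not_sbe {z : ℝ × ℝ} (hz : z ∈ Cset) (h : pp z ∉ sbe) : -1/4 < z.1 ∧ z.1 < 3/4 := by
  obtain ⟨h1, h2, h3, h4⟩ := mem_Cset.1 hz
  refine ⟨lt_of_le_of_ne h1 fun h' => h ⟨z, ⟨h'.symm, h3, h4⟩, rfl⟩,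
    lt_of_le_of_ne h2 fun h' => h ⟨(-1/4, z.2), ⟨rfl, h3, h4⟩, ?_⟩⟩
  rw [← pp_add_int _ _ 1]; congr 1; ext <;> simp [h']; norm_num

lemma not_sbe' {z : ℝ × ℝ} (hz : z ∈ Cset) (h : pp z ∉ sbe') : z.1 ≠ 1/4 := by
  obtain ⟨h1, h2, h3, h4⟩ := mem_Cset.1 hz
  exact fun h' => h ⟨z, ⟨h', h3, h4⟩, rfl⟩

def left (x : X) : Prop := 1/4 < (sec x).1

lemma sec_three {r : ℝ} (h0 : 0 ≤ r) (h1 : r ≤ 1) : sec (pp (3/4, r)) = (-1/4, r) := by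
  have : pp (3/4, r) = pp (-1/4, r) := by
    rw [← pp_add_int (-1/4) r 1]; congr 2; norm_num
  rw [this]
  refine sec_pp ⟨by simp, by norm_num, h0, h1, ?_⟩
  rintro ⟨-, h, -⟩; norm_num at h

lemma sec_bad {z : ℝ × ℝ} (h' : z.2 = 1 ∧ 3/8 ≤ z.1 ∧ z.1 ≤ 5/8) :
    sec (pp z) = (z.1 - 1/2, 1) := by
  have : gate 0 (z.1 - 1/2) := by
    rw [gate_iff]; push_cast; constructor <;> linarith [h'.2.1, h'.2.2]
  have e : pp z = pp (z.1 - 1/2, 1) := by rw [← pp_gate this, sub_add_cancel, ← h'.1]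
  rw [e]
  refine sec_pp ⟨by simp only; linarith [h'.2.1], by simp only; linarith [h'.2.2], by simp, by simp, ?_⟩
  rintro ⟨-, h, -⟩; simp only at h; linarith [h'.2.2]

def UA : Set X := (sal ∪ sbe)ᶜ
def UB : Set X := (sbe ∪ sbe')ᶜ
def UC : Set X := (sal ∪ sbe')ᶜ
lemma UA_open : IsOpen UA := (sal_closed.union sbe_closed).isOpen_compl
lemma UB_open : IsOpen UB := (sbe_closed.union sbe'_closed).isOpen_compl
lemma UC_open : IsOpen UC := (sal_closed.union sbe'_closed).isOpen_compl

lemma UA_sec {z : ℝ × ℝ} (hz : z ∈ Cset) (h : pp z ∈ UA) : z ∈ D0 := by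
  simp only [UA, mem_compl_iff, mem_union, not_or] at h
  obtain ⟨h1, h2, h3, h4⟩ := mem_Cset.1 hz
  exact ⟨h1, (not_sbe hz h.2).2, h3, h4, (not_sal hz h.1).2⟩

lemma U_cover (x : X) : x ∈ UA ∨ x ∈ UB ∨ x ∈ UC := by
  by_contra! h
  simp only [UA, UB, UC, mem_compl_iff, not_not, mem_union] at h
  obtain ⟨hA, hB, hC⟩ := h
  have e1 : x ∈ sal → (sec x).2 = 1 ∧ -1/8 ≤ (sec x).1 ∧ (sec x).1 ≤ 1/8 := by
    rintro ⟨z, hz, rfl⟩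
    rw [sec_pp]
    · exact hz
    · obtain ⟨h1, h2, h3⟩ := hz
      refine ⟨by linarith, by linarith, by linarith, by linarith, ?_⟩
      rintro ⟨-, h, -⟩; linarith
  have e2 : x ∈ sbe → (sec x).1 = -1/4 := by
    rintro ⟨z, ⟨hz, h3, h4⟩, rfl⟩
    rw [sec_pp]
    · exact hz
    · refine ⟨by linarith, by linarith, by linarith, by linarith, ?_⟩
      rintro ⟨-, h, -⟩; linarith
  have e3 : x ∈ sbe' → (sec x).1 = 1/4 := by
    rintro ⟨z, ⟨hz, h3, h4⟩, rfl⟩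
    rw [sec_pp]
    · exact hz
    · refine ⟨by linarith, by linarith, by linarith, by linarith, ?_⟩
      rintro ⟨-, h, -⟩; linarith
  rcases hA with hA | hA
  · have := e1 hA
    rcases hB with hB | hB
    · have := e2 hB; linarith
    · have := e3 hB; linarith
  · have := e2 hA
    rcases hC with hB | hB
    · have := e1 hB; linarith
    · have := e3 hB; linarith

lemma UAC (x : X) (h : x ∈ C2) : x ∈ UA ∨ x ∈ UC := by
  have e1 : x ∉ sal := by
    rintro ⟨z, hz, rfl⟩
    obtain ⟨a, b⟩ := z
    obtain ⟨h1, h2, h3⟩ := hz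
    simp only at h1; subst h1
    have := r_of_C2 zero_le_one le_rfl h
    norm_num at this
  rcases U_cover x with h | h | h
  · exact Or.inl h
  · left; simp only [UA, UB, mem_compl_iff, mem_union] at *; tauto
  · exact Or.inr h

lemma left_open : IsOpen ((sal ∪ sbe ∪ sbe')ᶜ ∩ {x | left x}) ∧
    IsOpen ((sal ∪ sbe ∪ sbe')ᶜ ∩ {x | ¬ left x}) := by
  have ho : IsOpen (sal ∪ sbe ∪ sbe')ᶜ :=
    ((sal_closed.union sbe_closed).union sbe'_closed).isOpen_compl
  have key : ∀ z : Cset, ppC z ∈ (sal ∪ sbe ∪ sbe')ᶜ → (sec (ppC z) = z ∧ (z : ℝ × ℝ).1 ≠ 1/4) := by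
    intro z hz
    have h1 : pp z ∈ UA := by simp only [UA, ppC, mem_compl_iff, mem_union] at *; tauto
    have h2 : pp z ∉ sbe' := by simp only [ppC, mem_compl_iff, mem_union] at *; tauto
    exact ⟨sec_pp (UA_sec z.2 h1), not_sbe' z.2 h2⟩
  constructor
  · rw [← quotC'.isOpen_preimage]
    have : ppC ⁻¹' ((sal ∪ sbe ∪ sbe')ᶜ ∩ {x | left x}) =
      ppC ⁻¹' ((sal ∪ sbe ∪ sbe')ᶜ) ∩ {z | 1/4 < (z : ℝ × ℝ).1} := by
      ext z
      simp only [mem_preimage, mem_inter_iff, mem_ofPred_eq, left]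
      refine and_congr_right fun h => ?_
      rw [(key z h).1]
    rw [this]
    exact (ho.preimage ppC_cont).inter (isOpen_lt (by fun_prop) (by fun_prop))
  · rw [← quotC'.isOpen_preimage]
    have : ppC ⁻¹' ((sal ∪ sbe ∪ sbe')ᶜ ∩ {x | ¬ left x}) =
      ppC ⁻¹' ((sal ∪ sbe ∪ sbe')ᶜ) ∩ {z | (z : ℝ × ℝ).1 < 1/4} := by
      ext z
      simp only [mem_preimage, mem_inter_iff, mem_ofPred_eq, left]
      refine and_congr_right fun h => ?_
      rw [(key z h).1, not_lt]
      exact ⟨fun h' => lt_of_le_of_ne h' (key z h).2, le_of_lt⟩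
    rw [this]
    exact (ho.preimage ppC_cont).inter (isOpen_lt (by fun_prop) (by fun_prop))



/-- Fibre of the covering: a reduced word of gates together with an integer. -/
@[ext] structure FF where
  l : List ℤ
  j : ℤ
  h : List.IsChain (fun a b : ℤ => a ≠ b + 1) l

instance : TopologicalSpace FF := ⊥
instance : DiscreteTopology FF := ⟨rfl⟩

lemma chain_tail {a : ℤ} {l : List ℤ} (h : List.IsChain (fun a b : ℤ => a ≠ b + 1) (a :: l)) :
    List.IsChain (fun a b : ℤ => a ≠ b + 1) l := by
  cases l with
  | nil => simp
  | cons b l => exact (List.isChain_cons_cons.1 h).2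

def tauL (l : List ℤ) (j : ℤ) : List ℤ × ℤ :=
  match l with
  | [] => ([2 * j], j)
  | n :: l0 => if n + 1 = 2 * j then (l0, j - 1) else ((2 * j) :: n :: l0, j)

def tauR (l : List ℤ) (j : ℤ) : List ℤ × ℤ :=
  match l with
  | [] => ([2 * j + 1], j + 1)
  | n :: l0 => if n + 1 = 2 * j + 1 then (l0, j) else ((2 * j + 1) :: n :: l0, j + 1)

lemma tauL_chain (l : List ℤ) (j : ℤ) (h : List.IsChain (fun a b : ℤ => a ≠ b + 1) l) :
    List.IsChain (fun a b : ℤ => a ≠ b + 1) (tauL l j).1 := by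
  cases l with
  | nil => simp [tauL]
  | cons n l0 =>
    simp only [tauL]; split_ifs with h'
    · exact chain_tail h
    · exact List.isChain_cons_cons.2 ⟨fun e => h' e.symm, h⟩

lemma tauR_chain (l : List ℤ) (j : ℤ) (h : List.IsChain (fun a b : ℤ => a ≠ b + 1) l) :
    List.IsChain (fun a b : ℤ => a ≠ b + 1) (tauR l j).1 := by
  cases l with
  | nil => simp [tauR]
  | cons n l0 =>
    simp only [tauR]; split_ifs with h'
    · exact chain_tail h
    · exact List.isChain_cons_cons.2 ⟨fun e => h' e.symm, h⟩

lemma tauRL (l : List ℤ) (j : ℤ) (h : List.IsChain (fun a b : ℤ => a ≠ b + 1) l) :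
    tauR (tauL l j).1 (tauL l j).2 = (l, j) := by
  cases l with
  | nil => simp [tauL, tauR]
  | cons n l0 =>
    simp only [tauL]; split_ifs with h'
    · cases l0 with
      | nil => simp [tauR]; omega
      | cons a l1 =>
        have := (List.isChain_cons_cons.1 h).1
        simp only [tauR]; rw [if_neg (by omega)]
        simp; omega
    · simp [tauR]

lemma tauLR (l : List ℤ) (j : ℤ) (h : List.IsChain (fun a b : ℤ => a ≠ b + 1) l) :
    tauL (tauR l j).1 (tauR l j).2 = (l, j) := by
  cases l with
  | nil => simp [tauL, tauR]; omega
  | cons n l0 =>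
    simp only [tauR]; split_ifs with h'
    · cases l0 with
      | nil => simp [tauL]; omega
      | cons a l1 =>
        have := (List.isChain_cons_cons.1 h).1
        simp only [tauL]; rw [if_neg (by omega)]
        simp; omega
    · simp only [tauL]; rw [if_pos (by omega)]; simp

def tau : Equiv.Perm FF where
  toFun v := ⟨(tauL v.l v.j).1, (tauL v.l v.j).2, tauL_chain _ _ v.h⟩
  invFun v := ⟨(tauR v.l v.j).1, (tauR v.l v.j).2, tauR_chain _ _ v.h⟩
  left_inv v := by
    have := tauRL v.l v.j v.h
    ext1 <;> simp [this]
  right_inv v := by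
    have := tauLR v.l v.j v.h
    ext1 <;> simp [this]

def dn : Equiv.Perm FF where
  toFun v := ⟨v.l, v.j - 1, v.h⟩
  invFun v := ⟨v.l, v.j + 1, v.h⟩
  left_inv v := by ext1 <;> simp
  right_inv v := by ext1 <;> simp

def shf (d : ℤ) (v : FF) : FF := ⟨v.l.map (· + 2 * d), v.j + d, by
  refine (List.isChain_map _).2 (v.h.imp ?_)
  intro a b h h'; apply h; linarith⟩

lemma shf_tau (d : ℤ) (v : FF) : shf d (tau v) = tau (shf d v) := by
  obtain ⟨l, j, h⟩ := v
  cases l with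
  | nil => ext1 <;> simp [shf, tau, tauL]; ring
  | cons n l0 =>
    by_cases h' : n + 1 = 2 * j
    · have h2 : n + 2 * d + 1 = 2 * (j + d) := by linarith
      ext1 <;> simp [shf, tau, tauL, h', h2]; ring
    · have h2 : ¬ n + 2 * d + 1 = 2 * (j + d) := fun e => h' (by linarith)
      ext1 <;> simp [shf, tau, tauL, h', h2]; ring

lemma shf_dn (d : ℤ) (v : FF) : shf d (dn v) = dn (shf d v) := by
  ext1 <;> simp [shf, dn]; ring

inductive Ix | A | B | C

def gg : Ix → Equiv.Perm FF
  | .A => 1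
  | .B => tau
  | .C => dn

def UU : Ix → Set X
  | .A => UA
  | .B => UB
  | .C => UC

open Classical in
noncomputable def ee (i : Ix) (x : X) : Equiv.Perm FF := if left x then gg i else 1

lemma shf_ee (d : ℤ) (i : Ix) (x : X) (v : FF) : shf d (ee i x v) = ee i x (shf d v) := by
  unfold ee; split_ifs
  · cases i
    · simp [gg]
    · exact shf_tau d v
    · exact shf_dn d v
  · simp

lemma shf_ee_symm (d : ℤ) (i : Ix) (x : X) (v : FF) :
    shf d ((ee i x).symm v) = (ee i x).symm (shf d v) := by
  rw [Equiv.eq_symm_apply, ← shf_ee, Equiv.apply_symm_apply]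

lemma UU_exists (x : X) : ∃ i, x ∈ UU i := by
  rcases U_cover x with h | h | h
  · exact ⟨.A, h⟩
  · exact ⟨.B, h⟩
  · exact ⟨.C, h⟩

lemma UU_inter {i j : Ix} (h : i ≠ j) : UU i ∩ UU j ⊆ (sal ∪ sbe ∪ sbe')ᶜ := by
  intro x hx
  cases i <;> cases j <;> simp only [UU, UA, UB, UC, mem_inter_iff, mem_compl_iff, mem_union,
    ne_eq, not_true_eq_false] at * <;> tauto

lemma UU_open (i : Ix) : IsOpen (UU i) := by
  cases i
  · exact UA_open
  · exact UB_open
  · exact UC_open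

/-- the bundle core -/
noncomputable def Zc : FiberBundleCore Ix X FF where
  baseSet := UU
  isOpen_baseSet := UU_open
  indexAt x := (UU_exists x).choose
  mem_baseSet_at x := (UU_exists x).choose_spec
  coordChange i j x v := (ee j x).symm (ee i x v)
  coordChange_self i x _ v := by simp
  continuousOn_coordChange i j := by
    by_cases hij : i = j
    · subst hij; simpa using continuousOn_snd
    · rintro ⟨x, v⟩ ⟨hx, -⟩
      have hx' := UU_inter hij hx
      refine ContinuousAt.continuousWithinAt ?_
      by_cases hl : left x
      · have : (fun p : X × FF => (ee j p.1).symm (ee i p.1 p.2)) =ᶠ[nhds (x, v)]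
            fun p => (gg j).symm (gg i p.2) := by
          have := left_open.1.mem_nhds ⟨hx', hl⟩
          filter_upwards [continuous_fst.continuousAt.preimage_mem_nhds this] with p hp
          simp only [ee, if_pos (show left p.1 from hp.2)]
        refine ContinuousAt.congr ?_ this.symm
        exact (continuous_of_discreteTopology (f := fun v => (gg j).symm (gg i v))).comp
          continuous_snd |>.continuousAt
      · have : (fun p : X × FF => (ee j p.1).symm (ee i p.1 p.2)) =ᶠ[nhds (x, v)]
            fun p => p.2 := by
          have := left_open.2.mem_nhds ⟨hx', hl⟩
          filter_upwards [continuous_fst.continuousAt.preimage_mem_nhds this] with p hp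
          simp only [ee, if_neg (show ¬ left p.1 from hp.2)]
          rfl
        exact ContinuousAt.congr continuous_snd.continuousAt this.symm
  coordChange_comp i j k x _ v := by simp

abbrev E := Zc.TotalSpace
noncomputable def pr : E → X := Zc.proj

lemma pr_cov : IsCoveringMap pr := FiberBundle.isCoveringMap (F := FF) (E := Zc.Fiber)

noncomputable def can (e : E) : FF := ee (Zc.indexAt e.1) e.1 e.2

noncomputable def mkE (x : X) (v : FF) : E := ⟨x, (ee (Zc.indexAt x) x).symm v⟩

lemma pr_mkE (x v) : pr (mkE x v) = x := rfl
lemma can_mkE (x v) : can (mkE x v) = v := by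
  exact Equiv.apply_symm_apply (ee (Zc.indexAt x) x) v
lemma mkE_can (e : E) : mkE (pr e) (can e) = e := by
  obtain ⟨x, v⟩ := e
  exact congrArg (fun w : FF => (⟨x, w⟩ : E)) (Equiv.symm_apply_apply (ee (Zc.indexAt x) x) v)

lemma E_ext {e e' : E} (h : pr e = pr e') (h' : can e = can e') : e = e' := by
  rw [← mkE_can e, ← mkE_can e', h, h']

lemma triv_apply (i : Ix) (e : E) : Zc.localTriv i e = (pr e, (ee i (pr e)).symm (can e)) := rfl

lemma triv_cont (i : Ix) : ContinuousOn (fun e : E => (ee i (pr e)).symm (can e)) (pr ⁻¹' UU i) := by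
  have := (Zc.localTriv i).continuousOn
  have h2 := continuous_snd.comp_continuousOn this
  refine h2.mono ?_
  intro e he
  exact (Zc.mem_localTriv_source i e).2 he

/-- deck transformations -/
noncomputable def deck (d : ℤ) (e : E) : E := mkE (pr e) (shf d (can e))

lemma pr_deck (d e) : pr (deck d e) = pr e := rfl
lemma can_deck (d e) : can (deck d e) = shf d (can e) := can_mkE _ _

lemma deck_cont (d : ℤ) : Continuous (deck d) := by
  rw [continuous_iff_continuousAt]
  intro e
  obtain ⟨i, hi⟩ := UU_exists (pr e)
  have hs : deck d e ∈ (Zc.localTriv i).source := (Zc.mem_localTriv_source i _).2 hi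
  have ho : pr ⁻¹' UU i ∈ nhds e := ((UU_open i).preimage pr_cov.continuous).mem_nhds hi
  rw [(Zc.localTriv i).toOpenPartialHomeomorph.continuousAt_iff_continuousAt_comp_left
    (f := deck d) (x := e)]
  · have : ((Zc.localTriv i).toOpenPartialHomeomorph ∘ deck d) = 
      fun e => (pr e, shf d ((ee i (pr e)).symm (can e))) := by
      funext e
      show Zc.localTriv i (deck d e) = _
      rw [triv_apply, can_deck, shf_ee_symm, pr_deck]
    rw [this]
    refine pr_cov.continuous.continuousAt.prodMk ?_
    exact ((continuous_of_discreteTopology (f := shf d)).comp_continuousOn (triv_cont i)).continuousAt ho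
  · filter_upwards [ho] with e' he'
    exact (Zc.mem_localTriv_source i _).2 he'



section desc
variable {P Z : Type*} [TopologicalSpace P] [TopologicalSpace Z]

def vl (Θ : List ℤ → P × (ℝ × ℝ) → Z) (v : FF) (p : P) (z : ℝ × ℝ) : Z :=
  Θ v.l (p, (z.1 + v.j, z.2))

lemma vl_cont {Θ : List ℤ → P × (ℝ × ℝ) → Z} (hc : ∀ l, Continuous (Θ l)) (v : FF) :
    Continuous fun q : P × Cset => vl Θ v q.1 q.2 := by
  unfold vl
  exact (hc v.l).comp (by fun_prop)

lemma vl_tau {Θ : List ℤ → P × (ℝ × ℝ) → Z}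
    (hg : ∀ n l p θ, gate n θ → Θ (n :: l) (p, (θ + 1/2, 1)) = Θ l (p, (θ, 1)))
    (v : FF) (p : P) {z : ℝ × ℝ} (h' : z.2 = 1 ∧ 3/8 ≤ z.1 ∧ z.1 ≤ 5/8) :
    vl Θ v p (z.1 - 1/2, 1) = vl Θ (tau v) p z := by
  obtain ⟨l, j, hl⟩ := v
  obtain ⟨θ, r⟩ := z
  obtain ⟨rfl, h1, h2⟩ := h'
  simp only at h1 h2
  have key : vl Θ ⟨l, j, hl⟩ p (θ - 1/2, 1) = Θ (2 * j :: l) (p, θ + j, 1) := by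
    have : gate (2 * j) (θ - 1/2 + j) := by rw [gate_iff]; push_cast; constructor <;> linarith
    unfold vl; simp only
    rw [← hg _ l p _ this]; congr 3; ring
  cases l with
  | nil => simp only [key]; rfl
  | cons n l0 =>
    by_cases h' : n + 1 = 2 * j
    · have hn : (n : ℝ) + 1 = 2 * j := by exact_mod_cast h'
      have : gate n (θ + j - 1) := by rw [gate_iff]; constructor <;> linarith
      unfold vl
      simp only [tau, tauL, Equiv.coe_fn_mk, if_pos h']
      rw [show (θ + ((j - 1 : ℤ) : ℝ), (1:ℝ)) = (θ + j - 1, 1) by push_cast; congr 1; ring,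
        ← hg _ l0 p _ this]; congr 3; ring
    · rw [key]
      unfold vl
      simp only [tau, tauL, Equiv.coe_fn_mk, if_neg h']

lemma desc_loc {Θ : List ℤ → P × (ℝ × ℝ) → Z} (hc : ∀ l, Continuous (Θ l))
    (hg : ∀ n l p θ, gate n θ → Θ (n :: l) (p, (θ + 1/2, 1)) = Θ l (p, (θ, 1)))
    (i : Ix) (v : FF) :
    ContinuousOn (fun q : P × X => vl Θ (ee i q.2 v) q.1 (sec q.2)) (Prod.snd ⁻¹' UU i) := by
  have ho : IsOpen ((Prod.snd : P × X → X) ⁻¹' UU i) := (UU_open i).preimage continuous_snd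
  rw [(quotC P).continuousOn_isOpen_iff ho]
  have ho' := ho.preimage (quotC P).continuous
  cases i with
  | A =>
    refine (vl_cont hc v).continuousOn.congr ?_
    rintro ⟨p, z⟩ hz
    have hz' := UA_sec z.2 hz
    have e : sec (ppC z) = z := sec_pp hz'
    simp only [Function.comp, Prod.map, e, id, ee, gg]
    split_ifs <;> rfl
  | B =>
    rintro ⟨p, z⟩ hz
    have hU : ∀ w : Cset, ppC w ∈ UB → -1/4 < (w : ℝ × ℝ).1 ∧ (w : ℝ × ℝ).1 < 3/4 ∧ (w : ℝ × ℝ).1 ≠ 1/4 := by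
      intro w hw
      have h1 : ppC w ∉ sbe := fun h => hw (Or.inl h)
      have h2 : ppC w ∉ sbe' := fun h => hw (Or.inr h)
      exact ⟨(not_sbe w.2 h1).1, (not_sbe w.2 h1).2, not_sbe' w.2 h2⟩
    refine ContinuousAt.continuousWithinAt ?_
    rcases lt_or_gt_of_ne (hU z hz).2.2 with h | h
    · refine ContinuousAt.congr (vl_cont hc v).continuousAt ?_
      have h1 : {q : P × Cset | (q.2 : ℝ × ℝ).1 < 1/4} ∈ nhds (p, z) :=
        (isOpen_lt (by fun_prop) (by fun_prop)).mem_nhds h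
      filter_upwards [h1, ho'.mem_nhds hz] with q hq hq'
      obtain ⟨p, z⟩ := q
      obtain ⟨u1, u2, u3⟩ := hU z hq'
      obtain ⟨h1, h2, h3, h4⟩ := mem_Cset.1 z.2
      have e : sec (ppC z) = z := sec_pp ⟨h1, u2, h3, h4, fun h => by
        have : (z : ℝ × ℝ).1 < 1/4 := hq
        linarith [h.2.1]⟩
      have nl : ¬ left (ppC z) := by
        unfold left; rw [e]; exact not_lt.2 (le_of_lt hq)
      simp only [Function.comp, Prod.map, e, id, ee, nl]
      rfl
    · refine ContinuousAt.congr (vl_cont hc (tau v)).continuousAt ?_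
      have h1 : {q : P × Cset | 1/4 < (q.2 : ℝ × ℝ).1} ∈ nhds (p, z) :=
        (isOpen_lt (by fun_prop) (by fun_prop)).mem_nhds h
      filter_upwards [h1, ho'.mem_nhds hz] with q hq hq'
      obtain ⟨p, z⟩ := q
      obtain ⟨u1, u2, u3⟩ := hU z hq'
      obtain ⟨h1, h2, h3, h4⟩ := mem_Cset.1 z.2
      by_cases hb : (z : ℝ × ℝ).2 = 1 ∧ 3/8 ≤ (z : ℝ × ℝ).1 ∧ (z : ℝ × ℝ).1 ≤ 5/8
      · have e : sec (ppC z) = _ := sec_bad hb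
        have nl : ¬ left (ppC z) := by
          unfold left; rw [e]; simp only; linarith [hb.2.2]
        simp only [Function.comp, Prod.map, e, id, ee, nl, if_false]
        rw [← vl_tau hg v p hb]; rfl
      · have e : sec (ppC z) = z := sec_pp ⟨h1, u2, h3, h4, hb⟩
        have nl : left (ppC z) := by
          unfold left; rw [e]; exact hq
        simp only [Function.comp, Prod.map, e, id, ee, nl]
        rfl
  | C =>
    rintro ⟨p, z⟩ hz
    have hU : ∀ w : Cset, ppC w ∈ UC → (w : ℝ × ℝ).1 ≠ 1/4 ∧
        ¬ ((w : ℝ × ℝ).2 = 1 ∧ 3/8 ≤ (w : ℝ × ℝ).1 ∧ (w : ℝ × ℝ).1 ≤ 5/8) := by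
      intro w hw
      have h1 : ppC w ∉ sal := fun h => hw (Or.inl h)
      have h2 : ppC w ∉ sbe' := fun h => hw (Or.inr h)
      exact ⟨not_sbe' w.2 h2, (not_sal w.2 h1).2⟩
    refine ContinuousAt.continuousWithinAt ?_
    rcases lt_or_gt_of_ne (hU z hz).1 with h | h
    · refine ContinuousAt.congr (vl_cont hc v).continuousAt ?_
      have h1 : {q : P × Cset | (q.2 : ℝ × ℝ).1 < 1/4} ∈ nhds (p, z) :=
        (isOpen_lt (by fun_prop) (by fun_prop)).mem_nhds h
      filter_upwards [h1, ho'.mem_nhds hz] with q hq hq'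
      obtain ⟨p, z⟩ := q
      have hq2 : (z : ℝ × ℝ).1 < 1/4 := hq
      obtain ⟨u1, u2⟩ := hU z hq'
      obtain ⟨h1, h2, h3, h4⟩ := mem_Cset.1 z.2
      have e : sec (ppC z) = z := sec_pp ⟨h1, by linarith, h3, h4, u2⟩
      have nl : ¬ left (ppC z) := by
        unfold left; rw [e]; exact not_lt.2 (le_of_lt hq)
      simp only [Function.comp, Prod.map, e, id, ee, nl]
      rfl
    · refine ContinuousAt.congr (vl_cont hc (dn v)).continuousAt ?_
      have h1 : {q : P × Cset | 1/4 < (q.2 : ℝ × ℝ).1} ∈ nhds (p, z) :=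
        (isOpen_lt (by fun_prop) (by fun_prop)).mem_nhds h
      filter_upwards [h1, ho'.mem_nhds hz] with q hq hq'
      obtain ⟨p, z⟩ := q
      have hq2 : 1/4 < (z : ℝ × ℝ).1 := hq
      obtain ⟨u1, u2⟩ := hU z hq'
      obtain ⟨h1, h2, h3, h4⟩ := mem_Cset.1 z.2
      rcases h2.lt_or_eq with h2 | h2
      · have e : sec (ppC z) = z := sec_pp ⟨h1, h2, h3, h4, u2⟩
        have nl : left (ppC z) := by
          unfold left; rw [e]; exact hq
        simp only [Function.comp, Prod.map, e, id, ee, nl]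
        rfl
      · have ez : (z : ℝ × ℝ) = (3/4, (z : ℝ × ℝ).2) := by ext <;> simp [h2]
        have e : sec (ppC z) = (-1/4, (z : ℝ × ℝ).2) := by
          unfold ppC; rw [ez]; exact sec_three h3 h4
        have nl : ¬ left (ppC z) := by
          unfold left; rw [e]; norm_num
        simp only [Function.comp, Prod.map, e, id, ee, nl, if_false, vl, h2, dn, Equiv.coe_fn_mk,
          Equiv.Perm.one_apply]
        congr 3; push_cast; ring

theorem desc {Θ : List ℤ → P × (ℝ × ℝ) → Z} (hc : ∀ l, Continuous (Θ l))
    (hg : ∀ n l p θ, gate n θ → Θ (n :: l) (p, (θ + 1/2, 1)) = Θ l (p, (θ, 1))) :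
    Continuous fun q : P × E => vl Θ (can q.2) q.1 (sec (pr q.2)) := by
  rw [continuous_iff_continuousAt]
  rintro ⟨p, e⟩
  obtain ⟨i, hi⟩ := UU_exists (pr e)
  have hcont := pr_cov.continuous
  have h1 : ContinuousAt (fun e : E => (ee i (pr e)).symm (can e)) e :=
    (triv_cont i).continuousAt (((UU_open i).preimage hcont).mem_nhds hi)
  set v := (ee i (pr e)).symm (can e) with hv
  have h2 : ∀ᶠ q : P × E in nhds (p, e), (ee i (pr q.2)).symm (can q.2) = v := by
    have : ∀ᶠ e' in nhds e, (ee i (pr e')).symm (can e') = v :=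
      h1.eventually_mem (s := {v}) (isOpen_discrete _ |>.mem_nhds rfl)
    exact (continuous_snd.tendsto (p, e)).eventually this
  have h3 : ContinuousAt (fun q : P × E => vl Θ (ee i (pr q.2) v) q.1 (sec (pr q.2))) (p, e) := by
    have := (desc_loc hc hg i v).continuousAt (x := (p, pr e))
      (((UU_open i).preimage continuous_snd).mem_nhds hi)
    exact ContinuousAt.comp (x := (p, e)) (f := fun q : P × E => (q.1, pr q.2))
      (g := fun q : P × X => vl Θ (ee i q.2 v) q.1 (sec q.2)) this (by fun_prop)
  refine h3.congr ?_
  filter_upwards [h2] with q hq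
  rw [← hq, Equiv.apply_symm_apply]

end desc



noncomputable def pj (n : ℤ) (θ : ℝ) : ℝ :=
  max (((n : ℝ) + 1)/2 - 1/8) (min (((n : ℝ) + 1)/2 + 1/8) θ)

lemma pj_cont (n : ℤ) : Continuous (pj n) := by unfold pj; fun_prop

lemma pj_gate (n : ℤ) (θ : ℝ) : gate n (pj n θ - 1/2) := by
  have h1 : ((n : ℝ) + 1)/2 - 1/8 ≤ pj n θ := le_max_left _ _
  have h2 : pj n θ ≤ ((n : ℝ) + 1)/2 + 1/8 := max_le (by linarith) (min_le_left _ _)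
  rw [gate_iff]; constructor <;> linarith

lemma pj_of_gate {n : ℤ} {θ : ℝ} (h : gate n θ) : pj n (θ + 1/2) = θ + 1/2 := by
  rw [gate_iff] at h
  unfold pj
  rw [min_eq_right (by linarith), max_eq_right (by linarith)]

lemma pj_shift (n d : ℤ) (θ : ℝ) : pj (n + 2 * d) (θ + d) = pj n θ + d := by
  unfold pj
  rw [← max_add_add_right, ← min_add_add_right]
  push_cast
  congr 1
  · ring
  · congr 1; ring

noncomputable def TT (n : ℤ) (z : ℝ × ℝ) : ℝ := max |pj n z.1 - z.1| (1 - z.2)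

lemma TT_nonneg (n z) : 0 ≤ TT n z := le_trans (abs_nonneg _) (le_max_left _ _)

lemma TT_cont (n : ℤ) : Continuous (TT n) := by
  have := pj_cont n
  unfold TT; fun_prop

lemma TT_gate {n : ℤ} {θ : ℝ} (h : gate n θ) : TT n (θ + 1/2, 1) = 0 := by
  simp only [TT, pj_of_gate h]; simp

lemma TT_shift (n d : ℤ) (θ r : ℝ) : TT (n + 2 * d) (θ + d, r) = TT n (θ, r) := by
  simp only [TT, pj_shift]; simp

noncomputable def mv (n : ℤ) (t : ℝ) (z : ℝ × ℝ) : ℝ × ℝ :=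
  (z.1 + max (-(max 0 t)) (min (max 0 t) (pj n z.1 - z.1)), min 1 (z.2 + max 0 t))

lemma mv_shift (n d : ℤ) (t θ r : ℝ) :
    mv (n + 2 * d) t (θ + d, r) = ((mv n t (θ, r)).1 + d, (mv n t (θ, r)).2) := by
  simp only [mv, pj_shift]; ext
  · simp only [add_sub_add_right_eq_sub]; ring
  · simp

lemma mv_TT (n z) : mv n (TT n z) z = (pj n z.1, 1) := by
  have h1 := TT_nonneg n z
  have h2 : |pj n z.1 - z.1| ≤ TT n z := le_max_left _ _
  have h3 : 1 - z.2 ≤ TT n z := le_max_right _ _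
  rw [abs_le] at h2
  unfold mv
  rw [max_eq_right h1, min_eq_right h2.2, max_eq_right h2.1, min_eq_left (by linarith)]
  simp

noncomputable def flowX : List ℤ → ℝ × (ℝ × ℝ) → X
  | [], q => pp (q.2.1, q.2.2 - max 0 q.1)
  | n :: l, q => if q.1 ≤ TT n q.2 then pp (mv n q.1 q.2)
      else flowX l (q.1 - TT n q.2, (pj n q.2.1 - 1/2, 1))

lemma flowX_nonpos (l : List ℤ) {t : ℝ} (ht : t ≤ 0) {z : ℝ × ℝ} (hz : z.2 ≤ 1) :
    flowX l (t, z) = pp z := by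
  cases l with
  | nil => simp [flowX, max_eq_left ht]
  | cons n l =>
    simp only [flowX]
    rw [if_pos (ht.trans (TT_nonneg n z))]
    simp [mv, max_eq_left ht, min_eq_right hz]

lemma flowX_cont (l : List ℤ) : Continuous (flowX l) := by
  induction l with
  | nil => 
    show Continuous fun q : ℝ × (ℝ × ℝ) => pp (q.2.1, q.2.2 - max 0 q.1)
    exact pp_cont.comp (by fun_prop)
  | cons n l ih =>
    have h1 := TT_cont n
    have h2 := pj_cont n
    show Continuous fun q : ℝ × (ℝ × ℝ) => if q.1 ≤ TT n q.2 then pp (mv n q.1 q.2)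
      else flowX l (q.1 - TT n q.2, (pj n q.2.1 - 1/2, 1))
    refine Continuous.if_le ?_ ?_ (by fun_prop) (by fun_prop) ?_
    · unfold mv; exact pp_cont.comp (by fun_prop)
    · exact ih.comp (by fun_prop)
    · rintro ⟨t, z⟩ h
      simp only at h; subst h
      simp only [mv_TT, sub_self]
      rw [flowX_nonpos _ le_rfl le_rfl, ← pp_gate (pj_gate n z.1)]
      simp

lemma flowX_gate (n : ℤ) (l : List ℤ) (t θ : ℝ) (h : gate n θ) :
    flowX (n :: l) (t, (θ + 1/2, 1)) = flowX l (t, (θ, 1)) := by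
  by_cases ht : t ≤ 0
  · rw [flowX_nonpos _ ht le_rfl, flowX_nonpos _ ht le_rfl, pp_gate h]
  · simp only [flowX, TT_gate h, if_neg ht, pj_of_gate h]
    simp

lemma flowX_shift (l : List ℤ) (d : ℤ) (t θ r : ℝ) :
    flowX (l.map (· + 2 * d)) (t, (θ + d, r)) = flowX l (t, (θ, r)) := by
  induction l generalizing t θ r with
  | nil => simp [flowX, pp_add_int]
  | cons n l ih =>
    simp only [List.map_cons, flowX, TT_shift, pj_shift, mv_shift, pp_add_int]
    rw [← ih (t - TT n (θ, r)) (pj n θ - 1/2) 1]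
    congr 4; ring

noncomputable def NtX : List ℤ → (ℝ × ℝ) → ℝ
  | [], z => z.2
  | n :: l, z => TT n z + NtX l (pj n z.1 - 1/2, 1)

noncomputable def angX : List ℤ → (ℝ × ℝ) → ℝ
  | [], z => z.1
  | n :: l, z => angX l (pj n z.1 - 1/2, 1)

lemma NtX_cont (l : List ℤ) : Continuous (NtX l) := by
  induction l with
  | nil => exact continuous_snd
  | cons n l ih =>
    have h1 := TT_cont n
    have h2 := pj_cont n
    exact (TT_cont n).add (ih.comp (g := NtX l) (f := fun z : ℝ × ℝ => (pj n z.1 - 1/2, 1)) (by fun_prop))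

lemma angX_cont (l : List ℤ) : Continuous (angX l) := by
  induction l with
  | nil => exact continuous_fst
  | cons n l ih =>
    have h2 := pj_cont n
    exact ih.comp (g := angX l) (f := fun z : ℝ × ℝ => (pj n z.1 - 1/2, 1)) (by fun_prop)

lemma NtX_one (l : List ℤ) (θ : ℝ) : 1 ≤ NtX l (θ, 1) := by
  induction l generalizing θ with
  | nil => simp [NtX]
  | cons n l ih =>
    have := TT_nonneg n (θ, 1)
    have := ih (pj n θ - 1/2)
    simp only [NtX]; linarith

lemma NtX_gate (n : ℤ) (l : List ℤ) (θ : ℝ) (h : gate n θ) :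
    NtX (n :: l) (θ + 1/2, 1) = NtX l (θ, 1) := by
  simp only [NtX, TT_gate h, pj_of_gate h]; simp

lemma angX_gate (n : ℤ) (l : List ℤ) (θ : ℝ) (h : gate n θ) :
    angX (n :: l) (θ + 1/2, 1) = angX l (θ, 1) := by
  simp only [angX, pj_of_gate h]; simp

lemma NtX_shift (l : List ℤ) (d : ℤ) (θ r : ℝ) :
    NtX (l.map (· + 2 * d)) (θ + d, r) = NtX l (θ, r) := by
  induction l generalizing θ r with
  | nil => simp [NtX]
  | cons n l ih =>
    simp only [List.map_cons, NtX, TT_shift, pj_shift]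
    rw [← ih (pj n θ - 1/2) 1]
    congr 3; ring

lemma flowX_Nt (l : List ℤ) (z : ℝ × ℝ) : flowX l (NtX l z, z) ∈ C2 := by
  induction l generalizing z with
  | nil =>
    simp only [flowX, NtX]
    apply pp_mem_C2
    linarith [le_max_right 0 z.2]
  | cons n l ih =>
    have := NtX_one l (pj n z.1 - 1/2)
    have e : NtX (n :: l) z = TT n z + NtX l (pj n z.1 - 1/2, 1) := rfl
    rw [e]
    simp only [flowX]
    rw [if_neg (by linarith), add_sub_cancel_left]
    exact ih _

noncomputable def flow (t : ℝ) (e : E) : X := vl flowX (can e) t (sec (pr e))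
noncomputable def Nt (e : E) : ℝ := vl (P := Unit) (fun l q => NtX l q.2) (can e) () (sec (pr e))
noncomputable def ang (e : E) : ℝ := vl (P := Unit) (fun l q => angX l q.2) (can e) () (sec (pr e))

lemma flow_cont : Continuous fun q : ℝ × E => flow q.1 q.2 :=
  desc flowX_cont flowX_gate

lemma Nt_cont : Continuous Nt := by
  have := desc (P := Unit) (Θ := fun l q => NtX l q.2)
    (fun l => (NtX_cont l).comp continuous_snd) (fun n l _ θ h => NtX_gate n l θ h)
  exact this.comp (f := fun e : E => ((), e)) (by fun_prop)

lemma ang_cont : Continuous ang := by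
  have := desc (P := Unit) (Θ := fun l q => angX l q.2)
    (fun l => (angX_cont l).comp continuous_snd) (fun n l _ θ h => angX_gate n l θ h)
  exact this.comp (f := fun e : E => ((), e)) (by fun_prop)

lemma flow_deck (d : ℤ) (t : ℝ) (e : E) : flow t (deck d e) = flow t e := by
  unfold flow vl
  rw [can_deck, pr_deck]
  simp only [shf]
  rw [← flowX_shift (can e).l d]
  push_cast
  congr 3; ring

lemma Nt_deck (d : ℤ) (e : E) : Nt (deck d e) = Nt e := by
  unfold Nt vl
  rw [can_deck, pr_deck]
  simp only [shf]
  rw [← NtX_shift (can e).l d]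
  push_cast
  congr 2; ring

lemma flow_zero (e : E) : flow 0 e = pr e := by
  unfold flow vl
  have := (sec_mem (pr e)).2.2.2.1
  rw [flowX_nonpos _ le_rfl (by exact this), pp_add_int]
  exact pp_sec (pr e)

lemma flow_Nt (e : E) : flow (Nt e) e ∈ C2 := flowX_Nt _ _

lemma sec_C2 {x : X} (h : x ∈ C2) : (sec x).2 = 0 := by
  have h1 := sec_mem x
  refine r_of_C2 (θ := (sec x).1) h1.2.2.1 h1.2.2.2.1 ?_
  rw [← pp_sec x] at h; exact h

lemma flow_root {e : E} (h : (can e).l = []) (h2 : pr e ∈ C2) {t : ℝ} : flow t e ∈ C2 := by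
  unfold flow vl
  rw [h]
  simp only [flowX]
  apply pp_mem_C2
  rw [sec_C2 h2]
  simp

lemma ang_root {e : E} (h : (can e).l = []) (h2 : pr e ∈ C2) : pp (ang e, 0) = pr e := by
  unfold ang vl
  rw [h]
  simp only [angX]
  rw [pp_add_int, ← sec_C2 h2]
  exact pp_sec _



lemma lift_exists {φ : ℝ × ℝ → X} (hφ : Continuous φ) (a : ℝ × ℝ) (e : E) (h : pr e = φ a) :
    ∃ Φ : ℝ × ℝ → E, Continuous Φ ∧ Φ a = e ∧ ∀ z, pr (Φ z) = φ z := by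
  obtain ⟨Φ, ⟨h1, h2⟩, -⟩ := pr_cov.existsUnique_continuousMap_lifts ⟨φ, hφ⟩ a e h
  exact ⟨Φ, Φ.continuous, h1, fun z => congrFun h2 z⟩

lemma lift_uniq {A : Type*} [TopologicalSpace A] [PreconnectedSpace A] {Φ Ψ : A → E}
    (h1 : Continuous Φ) (h2 : Continuous Ψ) (h : ∀ a, pr (Φ a) = pr (Ψ a)) (a : A)
    (ha : Φ a = Ψ a) (b : A) : Φ b = Ψ b :=
  congrFun (pr_cov.eq_of_comp_eq h1 h2 (funext h) a ha) b

lemma label_const {Γ : ℝ → E} (hΓ : Continuous Γ) (h : ∀ s, pr (Γ s) ∈ C2) (s t : ℝ) :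
    (can (Γ s)).l = (can (Γ t)).l := by
  have : IsLocallyConstant fun s => (can (Γ s)).l := by
    rw [IsLocallyConstant.iff_eventually_eq]
    intro s
    have : ∃ i, pr (Γ s) ∈ UU i ∧ ∀ x v, (ee i x v).l = v.l := by
      rcases UAC _ (h s) with h | h
      · refine ⟨.A, h, fun x v => ?_⟩
        unfold ee; split_ifs <;> rfl
      · refine ⟨.C, h, fun x v => ?_⟩
        unfold ee; split_ifs <;> rfl
    obtain ⟨i, hi, hl⟩ := this
    have h1 : ContinuousAt (fun e : E => (ee i (pr e)).symm (can e)) (Γ s) :=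
      (triv_cont i).continuousAt (((UU_open i).preimage pr_cov.continuous).mem_nhds hi)
    have h2 : ∀ᶠ e' in nhds (Γ s), (ee i (pr e')).symm (can e') = (ee i (pr (Γ s))).symm (can (Γ s)) :=
      h1.eventually_mem (s := {(ee i (pr (Γ s))).symm (can (Γ s))}) (isOpen_discrete _ |>.mem_nhds rfl)
    filter_upwards [hΓ.continuousAt.eventually h2] with s' hs'
    have := congrArg FF.l hs'
    rw [← hl (pr (Γ s')), ← hl (pr (Γ s)) ((ee i (pr (Γ s))).symm _), Equiv.apply_symm_apply,
      Equiv.apply_symm_apply] at this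
    exact this
  exact this.apply_eq_of_preconnectedSpace s t

lemma root_deck {e e' : E} (h : pr e = pr e') (h1 : (can e).l = []) (h2 : (can e').l = []) :
    ∃ d : ℤ, e' = deck d e := by
  refine ⟨(can e').j - (can e).j, E_ext (by rw [pr_deck, h]) ?_⟩
  rw [can_deck]
  ext1
  · simp [shf, h1, h2]
  · simp [shf]

lemma deck_zero (e : E) : deck 0 e = e := by
  refine E_ext (pr_deck _ _) ?_
  rw [can_deck]; ext1 <;> simp [shf]

lemma phi_half (f : C(X, X)) (b : X) (hb : ∀ x ∈ C1, f x = b) (s : ℝ) :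
    f (pp (s + 1/2, 1)) = f (pp (s, 1)) := by
  rcases pp_one s with ⟨m, h⟩ | ⟨h1, h2⟩
  · rw [pp_gate h]
  · rw [hb _ h1, hb _ h2]

lemma inessential_of_periodic (f : C(X, X)) (h22 : MapsTo f C2 C2) (A : ℝ → ℝ) (hA : Continuous A)
    (hp : ∀ s, A (s + 1) = A s) (hf : ∀ s, pp (A s, 0) = f (pp (s, 0))) :
    Inessential (restrictMap f h22) := by
  let κ : Icc (-1/4 : ℝ) (3/4) → C2 := fun s => ⟨pp (s, 0), pp_mem_C2 _ _ le_rfl⟩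
  have κc : Continuous κ := (pp_cont.comp (by fun_prop)).subtype_mk _
  have κs : Function.Surjective κ := by
    rintro ⟨x, hx⟩
    have h1 := sec_mem x
    refine ⟨⟨(sec x).1, h1.1, h1.2.1.le⟩, Subtype.ext ?_⟩
    show pp ((sec x).1, 0) = x
    rw [← sec_C2 hx]; exact pp_sec x
  have hq : Topology.IsQuotientMap (Prod.map (id : unitInterval → unitInterval) κ) := by
    have h2 : IsProperMap (Prod.map (id : unitInterval → unitInterval) κ) :=
      isProperMap_id.prodMap κc.isProperMap
    exact h2.isClosedMap.isQuotientMap h2.continuous (Function.surjective_id.prodMap κs)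
  let H : unitInterval × C2 → C2 := fun q =>
    ⟨pp ((1 - (q.1 : ℝ)) * A (sec q.2).1, 0), pp_mem_C2 _ _ le_rfl⟩
  have key : ∀ s ∈ Icc (-1/4 : ℝ) (3/4), A (sec (pp (s, 0))).1 = A s := by
    intro s hs
    rcases hs.2.lt_or_eq with h | h
    · rw [sec_pp]
      exact ⟨hs.1, h, le_rfl, zero_le_one, fun h => by simpa using h.1⟩
    · rw [h, sec_three le_rfl zero_le_one, ← hp]; congr 1; norm_num
  have Hc : Continuous H := by
    rw [hq.continuous_iff]
    have : H ∘ Prod.map (id : unitInterval → unitInterval) κ = fun q =>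
        ⟨pp ((1 - (q.1 : ℝ)) * A q.2, 0), pp_mem_C2 _ _ le_rfl⟩ := by
      funext q
      apply Subtype.ext
      show pp ((1 - (q.1 : ℝ)) * A (sec (pp (q.2, 0))).1, 0) = _
      rw [key _ q.2.2]
    rw [this]
    exact (pp_cont.comp (by fun_prop)).subtype_mk _
  refine ⟨⟨pp (0, 0), pp_mem_C2 _ _ le_rfl⟩, ⟨⟨⟨H, Hc⟩, ?_, ?_⟩⟩⟩
  · intro x
    apply Subtype.ext
    obtain ⟨s, rfl⟩ := κs x
    show pp ((1 - ((0 : unitInterval) : ℝ)) * A (sec (pp (s, 0))).1, 0) = f (pp (s, 0))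
    rw [key _ s.2, ← hf]; simp
  · intro x
    apply Subtype.ext
    show pp ((1 - ((1 : unitInterval) : ℝ)) * A (sec x).1, 0) = pp (0, 0)
    simp

lemma map_eq_nil {l : List ℤ} {d : ℤ} (hd : d ≠ 0) (h : l.map (· + 2 * d) = l) : l = [] := by
  cases l with
  | nil => rfl
  | cons n l =>
    simp only [List.map_cons, List.cons.injEq] at h
    omega

theorem main_lemma (f : C(X, X)) (b : X) (hb : ∀ x ∈ C1, f x = b) (h22 : MapsTo f C2 C2)
    (he : Essential (restrictMap f h22)) :
    ∃ F : unitInterval × X → X, Continuous F ∧ (∀ x, F (0, x) = f x) ∧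
      (∀ t, ∀ x ∈ C2, F (t, x) ∈ C2) ∧ ∀ x, F (1, x) ∈ C2 := by
  have hφ : Continuous fun z => f (pp z) := f.continuous.comp pp_cont
  have hC : ∀ s : ℝ, f (pp (s, 0)) ∈ C2 := fun s => h22 (pp_mem_C2 _ _ le_rfl)
  obtain ⟨Φ, Φc, Φ0, Φp⟩ := lift_exists hφ (0, 0) (mkE (f (pp (0, 0))) ⟨[], 0, by simp⟩) rfl
  have root : ∀ s : ℝ, (can (Φ (s, 0))).l = [] := by
    intro s
    rw [label_const (Γ := fun s => Φ (s, 0)) (by fun_prop) (fun s => by rw [Φp]; exact hC s) s 0, Φ0,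
      can_mkE]
  have per : ∀ n : ℤ, ∃ d : ℤ, ∀ s r : ℝ, Φ (s + n, r) = deck d (Φ (s, r)) := by
    intro n
    obtain ⟨d, hd⟩ := root_deck (e := Φ (0, 0)) (e' := Φ (0 + n, 0))
      (by rw [Φp, Φp, pp_add_int]) (root _) (root _)
    refine ⟨d, fun s r => ?_⟩
    exact lift_uniq (A := ℝ × ℝ) (Φ := fun z => Φ (z.1 + n, z.2)) (Ψ := fun z => deck d (Φ z))
      (by fun_prop) ((deck_cont d).comp Φc) (fun a => by rw [pr_deck, Φp, Φp, pp_add_int]) (0, 0) hd (s, r)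
  obtain ⟨d, hd⟩ := per 1
  have hd0 : d ≠ 0 := by
    rintro rfl
    refine he (inessential_of_periodic f h22 (fun s => ang (Φ (s, 0))) (ang_cont.comp (by fun_prop)) ?_ ?_)
    · intro s
      have := hd s 0
      rw [deck_zero] at this
      simp only [Int.cast_one] at this
      rw [this]
    · intro s
      rw [ang_root (root s), Φp]
      rw [Φp]; exact hC s
  have half := phi_half f b hb
  obtain ⟨Ψ, Ψc, Ψ0, Ψp⟩ := lift_exists hφ (0, 1) (Φ (0 + 1/2, 1)) (by rw [Φp, half])
  have ΨΦ : ∀ s : ℝ, Ψ (s, 1) = Φ (s + 1/2, 1) := by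
    intro s
    exact lift_uniq (Φ := fun s : ℝ => Ψ (s, 1)) (Ψ := fun s : ℝ => Φ (s + 1/2, 1)) (by fun_prop)
      (by fun_prop) (fun a => by rw [Ψp, Φp, half]) 0 Ψ0 s
  have Ψper : ∀ s r : ℝ, Ψ (s + (1 : ℤ), r) = deck d (Ψ (s, r)) := by
    intro s r
    refine lift_uniq (A := ℝ × ℝ) (Φ := fun z => Ψ (z.1 + (1 : ℤ), z.2)) (Ψ := fun z => deck d (Ψ z))
      (by fun_prop) ((deck_cont d).comp Ψc) (fun a => by rw [pr_deck, Ψp, Ψp, pp_add_int]) (0, 1) ?_ (s, r)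
    show Ψ (0 + (1 : ℤ), 1) = deck d (Ψ (0, 1))
    rw [ΨΦ, ΨΦ, ← hd]; congr 2; ring
  have Ψroot : (can (Ψ (0, 0))).l = [] := by
    apply map_eq_nil hd0
    have h1 := label_const (Γ := fun s => Ψ (s, 0)) (by fun_prop)
      (fun s => by rw [Ψp]; exact hC s) (0 + (1 : ℤ)) 0
    rw [Ψper, can_deck] at h1
    exact h1
  obtain ⟨k, hk⟩ := root_deck (e := Φ (0, 0)) (e' := Ψ (0, 0)) (by rw [Φp, Ψp]) (root _) Ψroot
  have hΨ : ∀ z, Ψ z = deck k (Φ z) := fun z =>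
    lift_uniq (A := ℝ × ℝ) Ψc ((deck_cont k).comp Φc)
      (fun a => by rw [Function.comp, pr_deck, Ψp, Φp]) (0, 0) hk z
  have hhalf : ∀ s : ℝ, Φ (s + 1/2, 1) = deck k (Φ (s, 1)) := fun s => by rw [← ΨΦ, hΨ]
  let G : unitInterval → ℝ × ℝ → X := fun t z => flow (t * Nt (Φ z)) (Φ z)
  have Gc : Continuous fun q : unitInterval × (ℝ × ℝ) => G q.1 q.2 := by
    have := Nt_cont
    exact flow_cont.comp (f := fun q : unitInterval × (ℝ × ℝ) => ((q.1 : ℝ) * Nt (Φ q.2), Φ q.2))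
      (by fun_prop)
  have Ginv : ∀ t z w, z ∈ Cset → w ∈ Cset → pp z = pp w → G t w = G t z := by
    rintro t ⟨θ, r⟩ ⟨θ', r'⟩ hz hw h
    obtain ⟨-, -, a3, a4⟩ := mem_Cset.1 hz
    obtain ⟨-, -, b3, b4⟩ := mem_Cset.1 hw
    rcases pp_inj a3 a4 b3 b4 h with ⟨rfl, n, rfl⟩ | ⟨rfl, rfl, -, n, rfl⟩
    · obtain ⟨d', hd'⟩ := per n
      simp only [G, hd', Nt_deck, flow_deck]
    · obtain ⟨d', hd'⟩ := per n
      simp only [G, hd', hhalf, Nt_deck, flow_deck]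
  refine ⟨fun q => G q.1 (sec q.2), ?_, ?_, ?_, ?_⟩
  · rw [(quotC unitInterval).continuous_iff]
    have : ((fun q : unitInterval × X => G q.1 (sec q.2)) ∘ Prod.map (id : unitInterval → unitInterval) ppC)
        = fun q => G q.1 q.2 := by
      funext q
      exact Ginv q.1 q.2 (sec (ppC q.2)) q.2.2 (D0_sub (sec_mem _)) (pp_sec _).symm
    rw [this]
    exact Gc.comp (f := fun q : unitInterval × Cset => (q.1, (q.2 : ℝ × ℝ))) (by fun_prop)
  · intro x
    simp only [G, Set.Icc.coe_zero, zero_mul, flow_zero, Φp, pp_sec]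
  · intro t x hx
    have e : sec x = ((sec x).1, 0) := by rw [← sec_C2 hx]
    apply flow_root
    · show (can (Φ (sec x))).l = []
      rw [e]; exact root _
    · show pr (Φ (sec x)) ∈ C2
      rw [Φp, pp_sec]; exact h22 hx
  · intro x
    simp only [G, Set.Icc.coe_one, one_mul]
    exact flow_Nt _



/-- Admissible odd vertical reparametrisations. -/
structure Eta where
  fn : ℝ → ℝ
  odd : ∀ y, fn (-y) = - fn y
  bd : ∀ y, |y| ≤ 1 → |fn y| ≤ 1
  lo : ∀ y, |y| ≤ 1 → min |y| (1/4) ≤ |fn y|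

lemma mem_Sq {p : ℝ × ℝ} : p ∈ Sq ↔ (0 ≤ p.1 ∧ p.1 ≤ 1) ∧ |p.2| ≤ 1 := by
  simp only [Sq, mem_prod, mem_Icc, abs_le]

def opS (η : Eta) (p : Sq) : Sq :=
  ⟨(p.1.1, η.fn p.1.2), mem_Sq.2 ⟨(mem_Sq.1 p.2).1, η.bd _ (mem_Sq.1 p.2).2⟩⟩

def opM (η : Eta) : M → M := Quot.lift (fun p => qm (opS η p)) (by
  intro p q h
  apply qm_eq_iff.2
  rcases h with h | ⟨h1, h2, h3⟩ | ⟨h1, h2, h3⟩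
  · left; simp only [opS, h]
  · right; left; exact ⟨h1, h2, by simp only [opS, h3, η.odd]⟩
  · right; right; exact ⟨h1, h2, by simp only [opS, h3, η.odd]⟩)

lemma opM_qm (η : Eta) (p : Sq) : opM η (qm p) = qm (opS η p) := rfl

lemma opM_mem (η : Eta) {m : M} (h : m ∈ Xset) : opM η m ∈ Xset := by
  obtain ⟨p, rfl⟩ := qm_surj m
  rw [opM_qm]
  rw [qm_mem_Xset, mem_Bdisc] at *
  intro h'
  refine h ⟨h'.1, ?_⟩
  have h1 : |η.fn p.1.2| < 1/4 := h'.2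
  have h2 := η.lo p.1.2 (mem_Sq.1 p.2).2
  by_contra! h3
  rw [min_eq_right h3] at h2
  linarith

def opX (η : Eta) (x : X) : X := ⟨opM η x, opM_mem η x.2⟩

def ayM : M → ℝ := Quot.lift (fun p : Sq => |p.1.2|) (by
  intro p q h
  rcases h with h | ⟨h1, h2, h3⟩ | ⟨h1, h2, h3⟩
  · simp only [h]
  · simp only [h3, abs_neg]
  · simp only [h3, abs_neg])

def ay (x : X) : ℝ := ayM x

lemma ay_cont : Continuous ay := by
  refine Continuous.comp (g := ayM) ?_ continuous_subtype_val
  rw [isQuotientMap_qm.continuous_iff]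
  show Continuous fun p : Sq => |p.1.2|
  fun_prop

lemma X_rep (x : X) : ∃ p : Sq, qm p = x := qm_surj _

lemma ay_eq {x : X} {p : Sq} (h : qm p = x) : ay x = |p.1.2| := by
  unfold ay; rw [← h]; rfl

lemma ay_nonneg (x : X) : 0 ≤ ay x := by
  obtain ⟨p, h⟩ := X_rep x; rw [ay_eq h]; exact abs_nonneg _

lemma ay_le (x : X) : ay x ≤ 1 := by
  obtain ⟨p, h⟩ := X_rep x; rw [ay_eq h]; exact (mem_Sq.1 p.2).2

lemma mem_C1 {x : X} : x ∈ C1 ↔ ay x = 1 := by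
  constructor
  · rintro ⟨p, h, h'⟩
    rw [ay_eq h]; rcases h' with h' | h' <;> simp [h']
  · intro h'
    obtain ⟨p, h⟩ := X_rep x
    rw [ay_eq h] at h'
    exact ⟨p, h, eq_or_eq_neg_of_abs_eq h'⟩

lemma ay_C2 {x : X} (h : x ∈ C2) : ay x ≤ 1/4 := by
  obtain ⟨p, h, h'⟩ := h
  rw [mem_Scirc] at h'
  rw [ay_eq h, ← h']; exact le_max_right _ _

lemma ay_op (η : Eta) (x : X) : ay (opX η x) = |η.fn (ay x)| := by
  obtain ⟨p, h⟩ := X_rep x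
  have h2 : qm (opS η p) = opX η x := by
    show _ = opM η x; rw [← h]; rfl
  rw [ay_eq h2, ay_eq h]
  show |η.fn p.1.2| = _
  rcases abs_choice p.1.2 with h | h <;> rw [h]
  rw [η.odd, abs_neg]

lemma op_id {η : Eta} {x : X} (h : ∀ y, |y| = ay x → η.fn y = y) : opX η x = x := by
  obtain ⟨p, hp⟩ := X_rep x
  apply Subtype.ext
  show opM η x = x
  rw [← hp, opM_qm]
  congr 1
  apply Subtype.ext
  show (p.1.1, η.fn p.1.2) = _
  rw [h _ (ay_eq hp).symm]

instance : CompactSpace Sq := isCompact_iff_compactSpace.1 (isCompact_Icc.prod isCompact_Icc)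

lemma opX_cont {P : Type*} [TopologicalSpace P] (N : P → Eta)
    (h : Continuous fun q : P × ℝ => (N q.1).fn q.2) :
    Continuous fun q : P × X => opX (N q.1) q.2 := by
  refine Continuous.subtype_mk ?_ _
  have h1 : Continuous fun q : P × M => opM (N q.1) q.2 := by
    have hq : Topology.IsQuotientMap (Prod.map (id : P → P) qm) := by
      have h2 : IsProperMap (Prod.map (id : P → P) qm) :=
        isProperMap_id.prodMap continuous_qm.isProperMap
      exact h2.isClosedMap.isQuotientMap h2.continuous (Function.surjective_id.prodMap qm_surj)
    rw [hq.continuous_iff]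
    show Continuous fun q : P × Sq => qm (opS (N q.1) q.2)
    refine continuous_qm.comp (Continuous.subtype_mk ?_ _)
    refine Continuous.prodMk (by fun_prop) ?_
    exact h.comp (f := fun q : P × Sq => (q.1, q.2.1.2)) (by fun_prop)
  exact h1.comp (f := fun q : P × X => (q.1, (q.2 : M))) (by fun_prop)

noncomputable def kfn (t y : ℝ) : ℝ :=
  max (-1) (min 1 (y + 2 * t * (max 0 (y - 1/4) - max 0 (-y - 1/4))))

lemma clamp_neg {c y : ℝ} (hc : 0 ≤ c) : max (-c) (min c (-y)) = - max (-c) (min c y) := by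
  rcases le_total y c with h | h
  · rcases le_total (-c) y with h' | h'
    · rw [min_eq_right (by linarith), max_eq_right (by linarith), min_eq_right h, max_eq_right h']
    · rw [min_eq_left (by linarith), max_eq_right (by linarith), min_eq_right h, max_eq_left h']
      simp
  · rw [min_eq_right (by linarith), max_eq_left (by linarith), min_eq_left h,
      max_eq_right (by linarith)]

lemma kfn_of_nonneg {t y : ℝ} (h : 0 ≤ t) (hy : 0 ≤ y) :
    kfn t y = min 1 (y + 2 * t * max 0 (y - 1/4)) := by
  unfold kfn
  rw [max_eq_left (show -y - 1/4 ≤ (0:ℝ) by linarith), sub_zero, max_eq_right]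
  refine le_min (by norm_num) ?_
  have : 0 ≤ 2 * t * max 0 (y - 1/4) := by positivity
  linarith

lemma kfn_neg (t y : ℝ) : kfn t (-y) = - kfn t y := by
  unfold kfn
  rw [← clamp_neg zero_le_one]
  congr 2; rw [neg_neg]; ring

noncomputable def kEta (t : unitInterval) : Eta where
  fn := kfn t
  odd := kfn_neg t
  bd y _ := by
    unfold kfn
    rw [abs_le]
    exact ⟨le_max_left _ _, max_le (by norm_num) (min_le_left _ _)⟩
  lo y hy := by
    have key : ∀ y : ℝ, 0 ≤ y → min |y| (1/4) ≤ |kfn t y| := by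
      intro y hy
      rw [kfn_of_nonneg t.2.1 hy, abs_of_nonneg hy]
      refine le_trans ?_ (le_abs_self _)
      have : 0 ≤ 2 * (t : ℝ) * max 0 (y - 1/4) := mul_nonneg (by linarith [t.2.1]) (le_max_left _ _)
      refine le_min ((min_le_right _ _).trans (by norm_num)) ((min_le_left _ _).trans (by linarith))
    rcases le_total 0 y with h | h
    · exact key y h
    · have := key (-y) (by linarith)
      rwa [abs_neg, kfn_neg, abs_neg] at this

lemma kEta_cont : Continuous fun q : unitInterval × X => opX (kEta q.1) q.2 := by
  apply opX_cont
  show Continuous fun q : unitInterval × ℝ => kfn q.1 q.2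
  unfold kfn; fun_prop

lemma k_zero (x : X) : opX (kEta 0) x = x := by
  apply op_id
  intro y hy
  have h := hy ▸ ay_le x
  rw [abs_le] at h
  show kfn (0 : unitInterval) y = y
  unfold kfn
  simp only [Set.Icc.coe_zero, mul_zero, zero_mul, add_zero]
  rw [min_eq_right h.2, max_eq_right h.1]

lemma k_C2 (t : unitInterval) {x : X} (hx : ay x ≤ 1/4) : opX (kEta t) x = x := by
  apply op_id
  intro y hy
  have h := hy ▸ hx
  rw [abs_le] at h
  show kfn t y = y
  unfold kfn
  rw [max_eq_left (show y - 1/4 ≤ (0:ℝ) by linarith), max_eq_left (show -y - 1/4 ≤ (0:ℝ) by linarith)]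
  simp only [sub_zero, mul_zero, add_zero]
  rw [min_eq_right (by linarith), max_eq_right (by linarith)]

lemma k_C1 (t : unitInterval) {x : X} (hx : x ∈ C1) : opX (kEta t) x ∈ C1 := by
  rw [mem_C1] at *
  rw [ay_op, hx]
  show |kfn t 1| = 1
  rw [kfn_of_nonneg t.2.1 zero_le_one, min_eq_left]
  · simp
  · have : 0 ≤ 2 * (t : ℝ) * max 0 (1 - 1/4) := mul_nonneg (by linarith [t.2.1]) (le_max_left _ _)
    linarith

lemma k_one {x : X} (hx : 1/2 ≤ ay x) : opX (kEta 1) x ∈ C1 := by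
  rw [mem_C1, ay_op]
  show |kfn (1 : unitInterval) (ay x)| = 1
  rw [kfn_of_nonneg (1 : unitInterval).2.1 (by linarith), min_eq_left]
  · simp
  · simp only [Set.Icc.coe_one]
    have : ay x - 1/4 ≤ max 0 (ay x - 1/4) := le_max_right _ _
    linarith

lemma k_Bd (t : unitInterval) {x : X} (hx : x ∈ Bd) : opX (kEta t) x ∈ Bd := by
  rcases hx with h | h
  · exact Or.inl (k_C1 t h)
  · rw [k_C2 t (ay_C2 h)]; exact Or.inr h

noncomputable def qc (s : unitInterval) : ℝ := 1 - min 1 (2 * (s : ℝ)) / 2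

lemma qc_ge (s) : 1/2 ≤ qc s := by
  have : min 1 (2 * (s : ℝ)) ≤ 1 := min_le_left _ _
  unfold qc; linarith
lemma qc_le (s) : qc s ≤ 1 := by
  have : 0 ≤ min 1 (2 * (s : ℝ)) := le_min zero_le_one (by linarith [s.2.1])
  unfold qc; linarith

lemma abs_clamp {c y : ℝ} (hc : 0 ≤ c) : |max (-c) (min c y)| = min |y| c := by
  rcases le_total y c with h | h
  · rcases le_total (-c) y with h' | h'
    · rw [min_eq_right h, max_eq_right h', min_eq_left (abs_le.2 ⟨h', h⟩)]
    · rw [min_eq_right h, max_eq_left h', abs_neg, abs_of_nonneg hc, abs_of_nonpos (by linarith),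
        min_eq_right (by linarith)]
  · rw [min_eq_left h, max_eq_right (by linarith), abs_of_nonneg hc, abs_of_nonneg (by linarith),
      min_eq_right h]

noncomputable def qEta (s : unitInterval) : Eta where
  fn y := max (-(qc s)) (min (qc s) y)
  odd y := clamp_neg (by linarith [qc_ge s])
  bd y hy := by
    rw [abs_clamp (by linarith [qc_ge s])]; exact (min_le_left _ _).trans hy
  lo y hy := by
    rw [abs_clamp (by linarith [qc_ge s])]
    exact min_le_min_left _ (by linarith [qc_ge s])

lemma qEta_cont : Continuous fun q : unitInterval × X => opX (qEta q.1) q.2 := by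
  apply opX_cont
  show Continuous fun q : unitInterval × ℝ => max (-(qc q.1)) (min (qc q.1) q.2)
  unfold qc; fun_prop

lemma q_id (s : unitInterval) {x : X} (h : ay x ≤ qc s) : opX (qEta s) x = x := by
  apply op_id
  intro y hy
  rw [← hy, abs_le] at h
  show max (-(qc s)) (min (qc s) y) = y
  rw [min_eq_right h.2, max_eq_right h.1]

lemma q_zero (x : X) : opX (qEta 0) x = x := q_id 0 (by simpa [qc] using ay_le x)

lemma q_C2 (s : unitInterval) {x : X} (h : x ∈ C2) : opX (qEta s) x = x :=
  q_id s (by linarith [ay_C2 h, qc_ge s])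

lemma ay_q (s : unitInterval) (x : X) : ay (opX (qEta s) x) ≤ qc s := by
  rw [ay_op]
  show |max (-(qc s)) (min (qc s) (ay x))| ≤ _
  rw [abs_clamp (by linarith [qc_ge s])]; exact min_le_right _ _

lemma bh_of {f g : C(X, X)} (H : unitInterval × X → X) (Hc : Continuous H)
    (h0 : ∀ x, H (0, x) = f x) (h1 : ∀ x, H (1, x) = g x)
    (hb : ∀ x ∈ Bd, ∀ t, H (t, x) ∈ Bd) : BoundaryHomotopic f g :=
  ⟨⟨⟨H, Hc⟩, h0, h1⟩, hb⟩

lemma bh_trans {f g h : C(X, X)} (h1 : BoundaryHomotopic f g) (h2 : BoundaryHomotopic g h) :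
    BoundaryHomotopic f h := by
  obtain ⟨H, hH⟩ := h1
  obtain ⟨K, hK⟩ := h2
  refine ⟨H.trans K, fun x hx t => ?_⟩
  rw [ContinuousMap.Homotopy.trans_apply]
  split_ifs
  · exact hH x hx _
  · exact hK x hx _

noncomputable def kC : C(X, X) := ⟨opX (kEta 1), kEta_cont.comp (f := fun x : X => (1, x)) (by fun_prop)⟩

lemma bh_k {f : C(X, X)} (hf : BoundaryPreserving f) : BoundaryHomotopic f (f.comp kC) := by
  refine bh_of (fun q => f (opX (kEta q.1) q.2)) (f.continuous.comp kEta_cont) ?_ ?_ ?_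
  · intro x; simp only [k_zero]
  · intro x; rfl
  · intro x hx t; exact hf (k_Bd t hx)

/-- Step 1: make the map constant on `C1`. -/
lemma step1 (f : C(X, X)) (hf : BoundaryPreserving f) (h22 : MapsTo f C2 C2)
    (h1 : Inessential (restrictMap f (hf.mono_left Set.subset_union_left : MapsTo f C1 Bd))) :
    ∃ f1 : C(X, X), BoundaryHomotopic f f1 ∧ (∀ x ∈ C2, f1 x = f x) ∧
      ∃ b ∈ Bd, ∀ x ∈ C1, f1 x = b := by
  classical
  obtain ⟨b, ⟨hh⟩⟩ := h1
  let hE : unitInterval × X → X := fun q => if h : q.2 ∈ C1 then hh (q.1, ⟨q.2, h⟩) else f q.2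
  have hE0 : ∀ x, hE (0, x) = f x := by
    intro x
    by_cases h : x ∈ C1
    · simp only [hE, h, dif_pos, ContinuousMap.Homotopy.apply_zero]; rfl
    · simp only [hE, h, dif_neg, not_false_eq_true]
  have hE1 : ∀ x ∈ C1, hE (1, x) = b := by
    intro x h
    simp only [hE, h, dif_pos, ContinuousMap.Homotopy.apply_one]; rfl
  have hEB : ∀ t, ∀ x ∈ C1, hE (t, x) ∈ Bd := by
    intro t x h
    simp only [hE, h, dif_pos]; exact (hh _).2
  have hEc : ContinuousOn hE (Prod.snd ⁻¹' C1) := by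
    rw [continuousOn_iff_continuous_domRestrict]
    have : (Prod.snd ⁻¹' C1).domRestrict hE =
        fun q => (hh (q.1.1, ⟨q.1.2, q.2⟩) : X) := by
      funext q
      have := q.2
      simp only [mem_preimage] at this
      simp only [hE, Set.domRestrict_apply, this, dif_pos]
    rw [this]
    exact continuous_subtype_val.comp (hh.continuous.comp (by fun_prop))
  let sg : unitInterval × X → unitInterval := fun q =>
    projIcc 0 1 zero_le_one ((q.1 : ℝ) * (2 * ay q.2 - 1))
  have hay := ay_cont
  have sgc : Continuous sg := continuous_projIcc.comp (by fun_prop)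
  have sg0 : ∀ t x, ay x ≤ 1/2 → sg (t, x) = 0 := by
    intro t x h
    exact projIcc_of_le_left _ (mul_nonpos_of_nonneg_of_nonpos t.2.1 (by linarith))
  let H : unitInterval × X → X := fun q => hE (sg q, kC q.2)
  have Hlow : ∀ t x, ay x ≤ 1/2 → H (t, x) = f (kC x) := by
    intro t x h
    simp only [H, sg0 t x h, hE0]
  have Hc : Continuous H := by
    have c1 : IsClosed {q : unitInterval × X | ay q.2 ≤ 1/2} := isClosed_le (by fun_prop) (by fun_prop)
    have c2 : IsClosed {q : unitInterval × X | 1/2 ≤ ay q.2} := isClosed_le (by fun_prop) (by fun_prop)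
    have k1 : ContinuousOn H {q : unitInterval × X | ay q.2 ≤ 1/2} := by
      refine ContinuousOn.congr (f := fun q => f (kC q.2)) ?_ ?_
      · exact Continuous.continuousOn (by fun_prop)
      · rintro ⟨t, x⟩ hq; exact Hlow t x hq
    have k2 : ContinuousOn H {q : unitInterval × X | 1/2 ≤ ay q.2} := by
      refine hEc.comp (Continuous.continuousOn (by fun_prop)) ?_
      intro q hq
      exact k_one hq
    have := k1.union_of_isClosed k2 c1 c2
    rw [← continuousOn_univ]
    convert this using 1
    symm
    rw [eq_univ_iff_forall]
    intro q; rcases le_total (ay q.2) (1/2) with h | h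
    · exact Or.inl h
    · exact Or.inr h
  have HB : ∀ x ∈ Bd, ∀ t, H (t, x) ∈ Bd := by
    rintro x (hx | hx) t
    · exact hEB _ _ (k_C1 1 hx)
    · rw [Hlow t x (by linarith [ay_C2 hx])]
      exact hf (k_Bd 1 (Or.inr hx))
  refine ⟨⟨fun x => H (1, x), Hc.comp (by fun_prop)⟩,
    bh_trans (bh_k hf) (bh_of H Hc ?_ (fun x => rfl) HB), ?_, b, b.2, ?_⟩
  · intro x
    have : sg (0, x) = 0 := projIcc_of_le_left _ (by simp)
    simp only [H, this, hE0]; rfl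
  · intro x hx
    show H (1, x) = f x
    rw [Hlow 1 x (by linarith [ay_C2 hx])]
    show f (opX (kEta 1) x) = _
    rw [k_C2 1 (ay_C2 hx)]
  · intro x hx
    show H (1, x) = b
    have : sg (1, x) = 1 := projIcc_of_right_le _ (by rw [mem_C1.1 hx]; norm_num)
    simp only [H, this]
    exact hE1 _ (k_C1 1 hx)

theorem final (f : C(X, X)) (hf : BoundaryPreserving f)
    (h22 : MapsTo f C2 C2) (he2 : Essential (restrictMap f h22))
    (h1 : Inessential (restrictMap f (hf.mono_left Set.subset_union_left : MapsTo f C1 Bd))) :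
    ∃ g : C(X, X), BoundaryHomotopic f g ∧ ∀ x : X, g x = x → x ∈ Bd := by
  obtain ⟨f1, hb1, hf2, b, hb, hfb⟩ := step1 f hf h22 h1
  have h22' : MapsTo f1 C2 C2 := fun x hx => by rw [hf2 x hx]; exact h22 hx
  have hf1 : BoundaryPreserving f1 := by
    rintro x (hx | hx)
    · rw [hfb x hx]; exact hb
    · exact Or.inr (h22' hx)
  have he' : Essential (restrictMap f1 h22') := by
    have : restrictMap f1 h22' = restrictMap f h22 := by
      ext x; exact congrArg _ (hf2 x x.2)
    rw [this]; exact he2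
  obtain ⟨F, Fc, F0, F2, F1⟩ := main_lemma f1 b hfb h22' he'
  have hay := ay_cont
  let sg : X → unitInterval := fun x => projIcc 0 1 zero_le_one (2 * (1 - ay x))
  have sgc : Continuous sg := continuous_projIcc.comp (by fun_prop)
  let H : unitInterval × X → X := fun q =>
    opX (qEta (q.1 * sg q.2)) (F (q.1 * sg q.2, kC q.2))
  have Hc : Continuous H :=
    qEta_cont.comp (f := fun q : unitInterval × X => (q.1 * sg q.2, F (q.1 * sg q.2, kC q.2)))
      (by fun_prop)
  refine ⟨⟨fun x => H (1, x), Hc.comp (by fun_prop)⟩,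
    bh_trans hb1 (bh_trans (bh_k hf1) (bh_of H Hc ?_ (fun x => rfl) ?_)), ?_⟩
  · intro x
    simp only [H, zero_mul, q_zero, F0]; rfl
  · rintro x (hx | hx) t
    · have : sg x = 0 := projIcc_of_le_left _ (by rw [mem_C1.1 hx]; norm_num)
      simp only [H, this, mul_zero, q_zero, F0]
      exact hf1 (k_Bd 1 (Or.inl hx))
    · have hk : kC x = x := k_C2 1 (ay_C2 hx)
      have := F2 (t * sg x) x hx
      simp only [H, hk]
      rw [q_C2 _ this]
      exact Or.inr this
  · intro x hx
    have hx : H (1, x) = x := hx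
    simp only [H, one_mul] at hx
    rcases le_or_gt (ay x) (1/2) with h | h
    · have hs : sg x = 1 := projIcc_of_right_le _ (by linarith)
      rw [hs, q_C2 _ (F1 _)] at hx
      rw [← hx]; exact Or.inr (F1 _)
    · rcases (ay_le x).lt_or_eq with h' | h'
      · exfalso
        have h3 := ay_q (sg x) (F (sg x, kC x))
        rw [hx] at h3
        have hs : (sg x : ℝ) = 2 * (1 - ay x) := by
          have : 2 * (1 - ay x) ∈ Icc (0:ℝ) 1 := ⟨by linarith, by linarith⟩
          simp only [sg]
          rw [projIcc_of_mem _ this]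
        unfold qc at h3
        rw [hs] at h3
        rcases le_total 1 (2 * (2 * (1 - ay x))) with h4 | h4
        · rw [min_eq_left h4] at h3; linarith
        · rw [min_eq_right h4] at h3; linarith
      · exact Or.inl (mem_C1.2 h')



/-- A boundary semi-essential map of the punctured Möbius band with `f(C₂) ⊆ C₂`,
`f|C₂` essential and `f|C₁` inessential is boundary-homotopic to a map all of whose
fixed points lie on the boundary. -/
theorem stmt_11 (f : C(X, X)) (hf : BoundaryPreserving f)
    (h22 : MapsTo f C2 C2) (he2 : Essential (restrictMap f h22))
    (h1 : Inessential (restrictMap f (hf.mono_left Set.subset_union_left : MapsTo f C1 Bd))) :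
    ∃ g : C(X, X), BoundaryHomotopic f g ∧ ∀ x : X, g x = x → x ∈ Bd := by
  exact final f hf h22 he2 h1

end PMB
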